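/- arXiv:math/0609644 — 2 statements merged into one kernel-verified Lean document; each statement's English description precedes it below -/
import Mathlib

section
/- Let α ∈ S_a, β ∈ S_b and γ ∈ S_c be permutations. If |S_W(α)| ≤ |S_W(β)| for every Young diagram W, then |S_Y(α|γ)| ≤ |S_Y(β|γ)| for every Young diagram Y. -/
/-!
Given a transversal `π`, call a cell white if some copy of `γ` inside the diagram lies strictly to
the right of and strictly below it. The white cells again form a diagram, the shadow of `γ`, and for
nonempty `τ` the transversal contains `(τ|γ)` exactly when its shadow contains a copy of `τ`.

Moving the white dots around inside the shadow does not change the shadow: a copy of `γ` chosen as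
far to the right as possible has no white dots. So the transversals split into classes, two of them
being equivalent when they differ by such a move. Deleting the rows and columns of the non-white
dots turns the shadow into a smaller diagram `W`, and the members of a class that avoid `(τ|γ)`
correspond to the transversals of `W` avoiding `τ`. The hypothesis applied to each `W`, summed over
the classes, gives the inequality.

The argument needs nonempty patterns. If `α` is empty the claim is that avoiding `γ` implies
avoiding `(β|γ)`; if only `β` is empty, the hypothesis fails for the empty diagram.
-/

open Equiv

/-- `π` is a transversal of the Young diagram with row lengths `b` (zero-indexed:
the row at height `h` has `b h` cells, i.e. column `i` (1-indexed `i+1`) lies in that row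
iff `(i:ℕ)+1 ≤ b h`). -/
def IsTransversal {n : ℕ} (b : Fin n → ℕ) (π : Equiv.Perm (Fin n)) : Prop :=
  ∀ i : Fin n, (i : ℕ) + 1 ≤ b (π i)

/-- The transversal `π` contains the pattern `τ` inside the Young diagram `b`:
there are columns `f 0 < f 1 < …` whose dots are in the relative order prescribed by `τ`
and all rows and columns through these dots intersect inside the diagram. -/
def ContainsIn {n k : ℕ} (b : Fin n → ℕ) (π : Equiv.Perm (Fin n))
    (τ : Equiv.Perm (Fin k)) : Prop :=
  ∃ f : Fin k → Fin n, StrictMono f ∧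
    (∀ s t : Fin k, τ s < τ t ↔ π (f s) < π (f t)) ∧
    (∀ s t : Fin k, (f s : ℕ) + 1 ≤ b (π (f t)))

/-- `|S_Y(τ)|`: the number of transversals of the Young diagram `b` avoiding `τ` in `Y`. -/
noncomputable def SYcard {n k : ℕ} (b : Fin n → ℕ) (τ : Equiv.Perm (Fin k)) : ℕ :=
  Nat.card {π : Equiv.Perm (Fin n) // IsTransversal b π ∧ ¬ ContainsIn b π τ}

/-- Classical pattern containment for permutations. -/
def ContainsPat {n k : ℕ} (π : Equiv.Perm (Fin n)) (τ : Equiv.Perm (Fin k)) : Prop :=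
  ∃ f : Fin k → Fin n, StrictMono f ∧ ∀ s t : Fin k, τ s < τ t ↔ π (f s) < π (f t)

/-- `|S_n(τ)|`: the number of permutations of length `n` avoiding `τ`. -/
noncomputable def SnCard (n : ℕ) {k : ℕ} (τ : Equiv.Perm (Fin k)) : ℕ :=
  Nat.card {π : Equiv.Perm (Fin n) // ¬ ContainsPat π τ}

def p123 : Equiv.Perm (Fin 3) := Equiv.refl _
def p213 : Equiv.Perm (Fin 3) :=
  ⟨![1, 0, 2], ![1, 0, 2], by intro x; fin_cases x <;> rfl, by intro x; fin_cases x <;> rfl⟩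
def p312 : Equiv.Perm (Fin 3) :=
  ⟨![2, 0, 1], ![1, 2, 0], by intro x; fin_cases x <;> rfl, by intro x; fin_cases x <;> rfl⟩
def p321 : Equiv.Perm (Fin 3) :=
  ⟨![2, 1, 0], ![2, 1, 0], by intro x; fin_cases x <;> rfl, by intro x; fin_cases x <;> rfl⟩

/-- `(σ|τ)`: the block sum with the block of `σ` before and entirely above the block of `τ`. -/
def blockSum {m k : ℕ} (σ : Equiv.Perm (Fin m)) (τ : Equiv.Perm (Fin k)) :
    Equiv.Perm (Fin (m + k)) :=
  finSumFinEquiv.symm.trans ((((Equiv.sumCongr σ τ).trans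
    (Equiv.sumComm (Fin m) (Fin k))).trans finSumFinEquiv).trans
    (finCongr (Nat.add_comm k m)))

/-- `|S_{↘Y}(τ)|`: avoiders whose two leftmost entries are decreasing. -/
noncomputable def SYcardLeftDesc {m k : ℕ} (b : Fin m → ℕ) (τ : Equiv.Perm (Fin k)) : ℕ :=
  Nat.card {π : Equiv.Perm (Fin m) // IsTransversal b π ∧ ¬ ContainsIn b π τ ∧
    ∀ i j : Fin m, (i : ℕ) = 0 → (j : ℕ) = 1 → π j < π i}

/-- `|S_{↗Y}(τ)|`: avoiders whose two leftmost entries are increasing. -/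
noncomputable def SYcardLeftAsc {m k : ℕ} (b : Fin m → ℕ) (τ : Equiv.Perm (Fin k)) : ℕ :=
  Nat.card {π : Equiv.Perm (Fin m) // IsTransversal b π ∧ ¬ ContainsIn b π τ ∧
    ∀ i j : Fin m, (i : ℕ) = 0 → (j : ℕ) = 1 → π i < π j}

/-- `|S^{↘}_Y(τ)|`: avoiders in which the value `m` occurs to the left of the value `m-1`. -/
noncomputable def SYcardTopDesc {m k : ℕ} (b : Fin m → ℕ) (τ : Equiv.Perm (Fin k)) : ℕ :=
  Nat.card {π : Equiv.Perm (Fin m) // IsTransversal b π ∧ ¬ ContainsIn b π τ ∧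
    ∀ u v : Fin m, (u : ℕ) + 1 = m → (v : ℕ) + 2 = m → π⁻¹ u < π⁻¹ v}

/-- `|S^{↗}_Y(τ)|`: avoiders in which the value `m-1` occurs to the left of the value `m`. -/
noncomputable def SYcardTopAsc {m k : ℕ} (b : Fin m → ℕ) (τ : Equiv.Perm (Fin k)) : ℕ :=
  Nat.card {π : Equiv.Perm (Fin m) // IsTransversal b π ∧ ¬ ContainsIn b π τ ∧
    ∀ u v : Fin m, (u : ℕ) + 1 = m → (v : ℕ) + 2 = m → π⁻¹ v < π⁻¹ u}

section BlockSum

variable {k e : ℕ} (τ : Equiv.Perm (Fin k)) (γ : Equiv.Perm (Fin e))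

theorem blockSum_castAdd (s : Fin k) : (blockSum τ γ (Fin.castAdd e s) : ℕ) = e + τ s := by
  simp [blockSum, Nat.add_comm]

theorem blockSum_natAdd (u : Fin e) : (blockSum τ γ (Fin.natAdd k u) : ℕ) = γ u := by
  simp [blockSum]

theorem blockSum_castAdd_lt_castAdd_iff {s t : Fin k} :
    blockSum τ γ (Fin.castAdd e s) < blockSum τ γ (Fin.castAdd e t) ↔ τ s < τ t := by
  simp only [Fin.lt_def, blockSum_castAdd, Nat.add_lt_add_iff_left]

theorem blockSum_natAdd_lt_natAdd_iff {u v : Fin e} :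
    blockSum τ γ (Fin.natAdd k u) < blockSum τ γ (Fin.natAdd k v) ↔ γ u < γ v := by
  simp only [Fin.lt_def, blockSum_natAdd]

theorem blockSum_natAdd_lt_castAdd (s : Fin k) (u : Fin e) :
    blockSum τ γ (Fin.natAdd k u) < blockSum τ γ (Fin.castAdd e s) := by
  rw [Fin.lt_def, blockSum_castAdd, blockSum_natAdd]
  exact (γ u).2.trans_le (Nat.le_add_right _ _)

end BlockSum

section Regions

variable {C R : Type*} [Preorder C] [Preorder R] {k : ℕ}

/-- A Young diagram with columns `C` and rows `R`, given as the relation that holds for `i` and `y`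
when the cell in column `i` and row `y` belongs to the diagram. Columns and rows range over
arbitrary ordered types rather than `Fin n`, so that deleting some of them leaves a diagram on
subtypes, with no renumbering. -/
def IsDiagram (D : C → R → Prop) : Prop :=
  ∀ ⦃i j : C⦄ ⦃y z : R⦄, j ≤ i → y ≤ z → D i y → D j z

/-- The columns `f 0 < f 1 < …` carry a copy of the pattern `τ` in the filling `π`, and the
submatrix spanned by this copy lies inside the region `D`. -/
structure IsCopy (D : C → R → Prop) (π : C ≃ R) (τ : Equiv.Perm (Fin k)) (f : Fin k → C) :
    Prop where
  strictMono : StrictMono f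
  lt_iff_lt : ∀ s t, τ s < τ t ↔ π (f s) < π (f t)
  mem : ∀ s t, D (f s) (π (f t))

/-- The filling `π` contains the pattern `τ` inside the region `D`; on `Fin n` this is
`ContainsIn`, see `containsIn_iff`. -/
def Contains (D : C → R → Prop) (π : C ≃ R) (τ : Equiv.Perm (Fin k)) : Prop :=
  ∃ f, IsCopy D π τ f

/-- The number `|S_D(τ)|` of transversals of the region `D` that avoid `τ` inside `D`. -/
noncomputable def avoiderCard (D : C → R → Prop) (τ : Equiv.Perm (Fin k)) : ℕ :=
  Nat.card {π : C ≃ R // (∀ i, D i (π i)) ∧ ¬ Contains D π τ}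

variable {D : C → R → Prop} {π : C ≃ R} {τ : Equiv.Perm (Fin k)}

theorem contains_subtype_iff {s : Set C} {t : Set R} {σ : s ≃ t} (hσ : ∀ i, (σ i : R) = π i)
    (hs : ∀ i, D i (π i) → i ∈ s) :
    Contains (fun (i : s) (y : t) => D i y) σ τ ↔ Contains D π τ := by
  constructor
  · rintro ⟨f, hf, ho, hD⟩
    refine ⟨fun u => f u, hf, fun u v => ?_, fun u v => ?_⟩
    · rw [ho, ← hσ, ← hσ, Subtype.coe_lt_coe]
    · exact hσ (f v) ▸ hD u v
  · rintro ⟨f, hf, ho, hD⟩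
    refine ⟨fun u => ⟨f u, hs _ (hD u u)⟩, hf, fun u v => ?_, fun u v => ?_⟩
    · rw [ho, ← Subtype.coe_lt_coe, hσ, hσ]
    · simpa only [hσ] using hD u v

theorem avoiderCard_congr {C' R' : Type*} [Preorder C'] [Preorder R'] {D' : C' → R' → Prop}
    (eC : C ≃o C') (eR : R ≃o R') (hD : ∀ i y, D' (eC i) (eR y) ↔ D i y) :
    avoiderCard D τ = avoiderCard D' τ := by
  let E : (C ≃ R) ≃ (C' ≃ R') := Equiv.equivCongr eC.toEquiv eR.toEquiv
  have hE (π : C ≃ R) (i : C) : E π (eC i) = eR (π i) := by simp [E]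
  refine Nat.card_congr (E.subtypeEquiv fun π => and_congr ?_ (not_congr ?_))
  · rw [eC.surjective.forall (p := fun j => D' j (E π j))]
    simp only [hE, hD]
  · constructor
    · rintro ⟨f, hf, ho, hm⟩
      refine ⟨eC ∘ f, eC.strictMono.comp hf, fun s t => ?_, fun s t => ?_⟩
      · simp only [Function.comp_apply, hE, eR.lt_iff_lt, ho]
      · simpa only [Function.comp_apply, hE, hD] using hm s t
    · rintro ⟨f, hf, ho, hm⟩
      obtain ⟨f, rfl⟩ : ∃ f', eC ∘ f' = f := ⟨eC.symm ∘ f, by ext; simp⟩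
      simp only [Function.comp_apply, hE, hD, eR.lt_iff_lt] at ho hm
      exact ⟨f, fun s t hst => eC.lt_iff_lt.1 (hf hst), ho, hm⟩

theorem avoiderCard_le_of_contains_imp [Finite C] {l : ℕ} {τ' : Equiv.Perm (Fin l)}
    (h : ∀ π : C ≃ R, Contains D π τ' → Contains D π τ) : avoiderCard D τ ≤ avoiderCard D τ' :=
  Nat.card_le_card_of_injective _
    (Subtype.impEmbedding _ _ fun π hπ => ⟨hπ.1, fun hc => hπ.2 (h π hc)⟩).injective

end Regions

section RowLengths

/-- The diagram with row lengths `b`, as a relation between columns and rows. -/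
def cells {n : ℕ} (b : Fin n → ℕ) (i y : Fin n) : Prop :=
  (i : ℕ) + 1 ≤ b y

theorem containsIn_iff {n k : ℕ} {b : Fin n → ℕ} {π : Equiv.Perm (Fin n)}
    {τ : Equiv.Perm (Fin k)} : ContainsIn b π τ ↔ Contains (cells b) π τ :=
  exists_congr fun _ => ⟨fun ⟨hf, ho, hm⟩ => ⟨hf, ho, hm⟩, fun ⟨hf, ho, hm⟩ => ⟨hf, ho, hm⟩⟩

theorem SYcard_eq_avoiderCard {n k : ℕ} (b : Fin n → ℕ) (τ : Equiv.Perm (Fin k)) :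
    SYcard b τ = avoiderCard (cells b) τ := by
  simp only [SYcard, avoiderCard, containsIn_iff, IsTransversal, cells]

theorem isDiagram_cells {n : ℕ} {b : Fin n → ℕ} (hb : Monotone b) : IsDiagram (cells b) :=
  fun _ _ _ _ hji hyz h => (Nat.succ_le_succ hji).trans (h.trans (hb hyz))

/-- The dots in the rows up to `y` occupy `y + 1` of the first `b y` columns. -/
theorem IsTransversal.succ_le {n : ℕ} {b : Fin n → ℕ} {π : Equiv.Perm (Fin n)}
    (hπ : IsTransversal b π) (hb : Monotone b) (y : Fin n) : (y : ℕ) + 1 ≤ b y := by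
  have hsub : (Finset.Iic y).map π.symm.toEmbedding ⊆
      Finset.univ.filter fun i => (i : ℕ) < b y := by
    intro i hi
    rw [Finset.mem_map_equiv, Equiv.symm_symm, Finset.mem_Iic] at hi
    exact Finset.mem_filter.2 ⟨Finset.mem_univ i, (hπ i).trans (hb hi)⟩
  have hcard := Finset.card_le_card hsub
  rw [Finset.card_map, Fin.card_Iic, Fin.card_filter_val_lt] at hcard
  exact hcard.trans (min_le_right _ _)

theorem lt_card_filter_iff {m : ℕ} {p : Fin m → Prop} [DecidablePred p] (hp : Antitone p)
    (j : Fin m) : (j : ℕ) < (Finset.univ.filter p).card ↔ p j := by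
  classical
  simpa using Tuple.lt_card_le_iff_apply_le_of_monotone (j := j) (a := OrderDual.toDual True)
    hp.dual_right

variable {C R : Type*} [LinearOrder C] [LinearOrder R] [Finite C] {D : C → R → Prop}

theorem IsDiagram.exists_rowLengths (hD : IsDiagram D) {π : C ≃ R} (hπ : ∀ i, D i (π i)) :
    ∃ (m : ℕ) (w : Fin m → ℕ), Monotone w ∧ (∀ y : Fin m, (y : ℕ) + 1 ≤ w y ∧ w y ≤ m) ∧
      ∀ {k : ℕ} (τ : Equiv.Perm (Fin k)), avoiderCard D τ = SYcard w τ := by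
  classical
  have := Fintype.ofFinite C
  have := Fintype.ofEquiv C π
  let eC := Fintype.orderIsoFinOfCardEq C rfl
  let eR := Fintype.orderIsoFinOfCardEq R (Fintype.card_congr π).symm
  let w (y : Fin (Fintype.card C)) : ℕ := (Finset.univ.filter fun j => D (eC j) (eR y)).card
  have hw (j y : Fin (Fintype.card C)) : (j : ℕ) + 1 ≤ w y ↔ D (eC j) (eR y) :=
    lt_card_filter_iff (p := fun j => D (eC j) (eR y))
      (fun _ _ hij => hD (eC.monotone hij) le_rfl) j
  have hmono : Monotone w := fun y z hyz =>
    Finset.card_le_card (Finset.monotone_filter_right _ fun j _ =>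
      hD le_rfl (eR.monotone hyz))
  have htrans : IsTransversal w ((eC.toEquiv.trans π).trans eR.toEquiv.symm) := fun j =>
    (hw _ _).2 (by simpa using hπ (eC j))
  refine ⟨_, w, hmono, fun y => ⟨htrans.succ_le hmono y, ?_⟩, fun τ => ?_⟩
  · exact (Finset.card_le_univ _).trans_eq (Fintype.card_fin _)
  · rw [SYcard_eq_avoiderCard]
    exact (avoiderCard_congr eC eR fun j y => (hw j y).symm).symm

theorem IsDiagram.avoiderCard_le {a c : ℕ} {α : Equiv.Perm (Fin a)} {β : Equiv.Perm (Fin c)}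
    (h : ∀ (m : ℕ) (w : Fin m → ℕ), Monotone w →
      (∀ y : Fin m, (y : ℕ) + 1 ≤ w y ∧ w y ≤ m) → SYcard w α ≤ SYcard w β)
    (hD : IsDiagram D) : avoiderCard D α ≤ avoiderCard D β := by
  by_cases hex : ∃ π : C ≃ R, ∀ i, D i (π i)
  · obtain ⟨π, hπ⟩ := hex
    obtain ⟨m, w, hmono, hw, hcard⟩ := hD.exists_rowLengths hπ
    rw [hcard, hcard]
    exact h m w hmono hw
  · have : IsEmpty {π : C ≃ R // (∀ i, D i (π i)) ∧ ¬ Contains D π α} :=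
      ⟨fun π => hex ⟨π, π.2.1⟩⟩
    exact Nat.card_of_isEmpty.trans_le (Nat.zero_le _)

theorem SYcard_fin_zero_eq_zero_iff {k : ℕ} (b : Fin 0 → ℕ) (τ : Equiv.Perm (Fin k)) :
    SYcard b τ = 0 ↔ IsEmpty (Fin k) := by
  rw [SYcard, Finite.card_eq_zero_iff, isEmpty_subtype]
  constructor
  · exact fun h => not_nonempty_iff.1 fun ⟨s⟩ =>
      h 1 ⟨fun i => i.elim0, fun ⟨f, _⟩ => (f s).elim0⟩
  · rintro _ π ⟨-, hπ⟩
    exact hπ ⟨isEmptyElim, isEmptyElim, isEmptyElim, isEmptyElim⟩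

end RowLengths

section Shadow

variable {C R : Type*} [Preorder C] [Preorder R] {k e : ℕ} {D : C → R → Prop} {π : C ≃ R}
  {τ : Equiv.Perm (Fin k)} {γ : Equiv.Perm (Fin e)}

theorem isCopy_blockSum_iff (hD : IsDiagram D) {f : Fin (k + e) → C} :
    IsCopy D π (blockSum τ γ) f ↔
      IsCopy D π τ (fun s => f (Fin.castAdd e s)) ∧ IsCopy D π γ (fun u => f (Fin.natAdd k u)) ∧
        ∀ s u, f (Fin.castAdd e s) < f (Fin.natAdd k u) ∧
          π (f (Fin.natAdd k u)) < π (f (Fin.castAdd e s)) := by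
  have hlt (s : Fin k) (u : Fin e) : Fin.castAdd e s < Fin.natAdd k u := Nat.lt_add_right _ s.2
  have hτγ := blockSum_natAdd_lt_castAdd τ γ
  constructor
  · rintro ⟨hf, ho, hm⟩
    refine ⟨⟨fun s t hst => hf hst, fun s t => ?_, fun s t => hm _ _⟩,
      ⟨fun u v huv => hf (Nat.add_lt_add_left huv k), fun u v => ?_, fun u v => hm _ _⟩,
      fun s u => ⟨hf (hlt s u), (ho _ _).1 (hτγ s u)⟩⟩
    · rw [← blockSum_castAdd_lt_castAdd_iff τ γ, ho]
    · rw [← blockSum_natAdd_lt_natAdd_iff τ γ, ho]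
  · rintro ⟨⟨hf, hfo, hfm⟩, ⟨hg, hgo, hgm⟩, hfg⟩
    refine ⟨?_, ?_, ?_⟩
    · simp only [StrictMono, Fin.forall_fin_add]
      exact ⟨fun s => ⟨fun t hst => hf hst, fun u _ => (hfg s u).1⟩,
        fun u => ⟨fun s hus => absurd hus (hlt s u).not_gt,
          fun v huv => hg (Nat.lt_of_add_lt_add_left huv)⟩⟩
    · simp only [Fin.forall_fin_add, blockSum_castAdd_lt_castAdd_iff, blockSum_natAdd_lt_natAdd_iff]
      exact ⟨fun s => ⟨hfo s, fun u => iff_of_false (hτγ s u).not_gt (hfg s u).2.not_gt⟩,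
        fun u => ⟨fun s => iff_of_true (hτγ s u) (hfg s u).2, hgo u⟩⟩
    · simp only [Fin.forall_fin_add]
      exact ⟨fun s => ⟨hfm s, fun u => hD (hfg s u).1.le le_rfl (hgm u u)⟩,
        fun u => ⟨fun s => hD le_rfl (hfg s u).2.le (hgm u u), hgm u⟩⟩

theorem Contains.right (hD : IsDiagram D) (h : Contains D π (blockSum τ γ)) : Contains D π γ :=
  let ⟨_, hf⟩ := h
  ⟨_, ((isCopy_blockSum_iff hD).1 hf).2.1⟩

theorem contains_blockSum_iff_of_isEmpty [IsEmpty (Fin k)] (hD : IsDiagram D) :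
    Contains D π (blockSum τ γ) ↔ Contains D π γ := by
  refine ⟨Contains.right hD, fun ⟨g, hg⟩ => ⟨Fin.addCases isEmptyElim g, ?_⟩⟩
  rw [isCopy_blockSum_iff hD]
  refine ⟨⟨isEmptyElim, isEmptyElim, isEmptyElim⟩, ?_, isEmptyElim⟩
  simpa only [Fin.addCases_right] using hg

/-- The white cells of the filling `π`: the cells of `D` that have a copy of `γ` in `D` strictly to
the right of and strictly below them. -/
def shadow (D : C → R → Prop) (γ : Equiv.Perm (Fin e)) (π : C ≃ R) (i : C) (y : R) : Prop :=
  D i y ∧ ∃ g, IsCopy D π γ g ∧ ∀ u, i < g u ∧ π (g u) < y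

theorem IsDiagram.shadow (hD : IsDiagram D) (γ : Equiv.Perm (Fin e)) (π : C ≃ R) :
    IsDiagram (shadow D γ π) := by
  rintro i j y z hji hyz ⟨hiy, g, hg, hlt⟩
  exact ⟨hD hji hyz hiy, g, hg, fun u => ⟨hji.trans_lt (hlt u).1, (hlt u).2.trans_le hyz⟩⟩

theorem shadow.or_exists_ne {i : C} {y : R} (h : shadow D γ π i y) (π₀ : C ≃ R) :
    shadow D γ π₀ i y ∨ ∃ j, i < j ∧ π j < y ∧ π j ≠ π₀ j := by
  obtain ⟨hiy, g, hg, hlt⟩ := h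
  by_cases heq : ∀ u, π (g u) = π₀ (g u)
  · obtain ⟨hmono, ho, hm⟩ := hg
    simp only [heq] at ho hm hlt
    exact .inl ⟨hiy, g, ⟨hmono, ho, hm⟩, hlt⟩
  · obtain ⟨u, hu⟩ := not_forall.1 heq
    exact .inr ⟨g u, (hlt u).1, (hlt u).2, hu⟩

theorem contains_blockSum_iff {C R : Type*} [LinearOrder C] [LinearOrder R] {D : C → R → Prop}
    {π : C ≃ R} [Nonempty (Fin k)] (hD : IsDiagram D) :
    Contains D π (blockSum τ γ) ↔ Contains (shadow D γ π) π τ := by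
  constructor
  · rintro ⟨f, hf⟩
    obtain ⟨hτ, hγ, hlt⟩ := (isCopy_blockSum_iff hD).1 hf
    exact ⟨_, hτ.strictMono, hτ.lt_iff_lt,
      fun s t => ⟨hτ.mem s t, _, hγ, fun u => ⟨(hlt s u).1, (hlt t u).2⟩⟩⟩
  · rintro ⟨f, hf⟩
    obtain ⟨last, hlast⟩ := Finite.exists_max f
    obtain ⟨lowest, hlowest⟩ := Finite.exists_min (π ∘ f)
    -- A copy of `γ` beyond the corner cell of the copy of `τ` is beyond all of its cells.
    obtain ⟨-, g, hg, hlt⟩ := hf.mem last lowest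
    refine ⟨Fin.addCases f g, (isCopy_blockSum_iff hD).2 ?_⟩
    simp only [Fin.addCases_left, Fin.addCases_right]
    exact ⟨⟨hf.strictMono, hf.lt_iff_lt, fun s t => (hf.mem s t).1⟩, hg,
      fun s u => ⟨(hlast s).trans_lt (hlt u).1, (hlt u).2.trans_le (hlowest s)⟩⟩

end Shadow

section Refilling

variable {C R : Type*} {X D : C → R → Prop} {π₀ π π' : C ≃ R}

/-- The filling `π` arises from `π₀` by moving the dots of `π₀` in the region `X` within `X`. For
`X` the shadow of `π₀` this is the equivalence relation whose classes are compared one by one. -/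
structure IsRefilling (X : C → R → Prop) (π₀ π : C ≃ R) : Prop where
  eq_of_notMem : ∀ i, ¬ X i (π₀ i) → π i = π₀ i
  mem_of_mem : ∀ i, X i (π₀ i) → X i (π i)

namespace IsRefilling

theorem mem_of_ne (h : IsRefilling X π₀ π) {i : C} (hi : π i ≠ π₀ i) : X i (π₀ i) :=
  not_not.1 fun hn => hi (h.eq_of_notMem i hn)

theorem mem_iff_mem (h : IsRefilling X π₀ π) (i : C) : X i (π i) ↔ X i (π₀ i) :=
  ⟨fun hi => not_not.1 fun hn => hn (h.eq_of_notMem i hn ▸ hi), h.mem_of_mem i⟩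

theorem refl (X : C → R → Prop) (π : C ≃ R) : IsRefilling X π π :=
  ⟨fun _ _ => rfl, fun _ => id⟩

theorem symm (h : IsRefilling X π₀ π) : IsRefilling X π π₀ where
  eq_of_notMem i hi := (h.eq_of_notMem i fun hi₀ => hi (h.mem_of_mem i hi₀)).symm
  mem_of_mem i := (h.mem_iff_mem i).1

theorem trans (h : IsRefilling X π₀ π) (h' : IsRefilling X π π') : IsRefilling X π₀ π' where
  eq_of_notMem i hi :=
    (h'.eq_of_notMem i fun hi' => hi ((h.mem_iff_mem i).1 hi')).trans (h.eq_of_notMem i hi)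
  mem_of_mem i hi := h'.mem_of_mem i (h.mem_of_mem i hi)

theorem forall_mem_of_le (h : IsRefilling X π₀ π) (hXD : X ≤ D) (h₀ : ∀ i, D i (π₀ i)) (i : C) :
    D i (π i) := by
  by_cases hi : X i (π₀ i)
  · exact hXD i _ (h.mem_of_mem i hi)
  · exact h.eq_of_notMem i hi ▸ h₀ i

end IsRefilling

theorem card_isRefilling_avoiding [Preorder C] [Preorder R] {k : ℕ} (X : C → R → Prop)
    (π₀ : C ≃ R) (τ : Equiv.Perm (Fin k)) :
    let fixed : Set C := {i | ¬ X i (π₀ i)}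
    Nat.card {π // IsRefilling X π₀ π ∧ ¬ Contains X π τ} =
      avoiderCard (fun (i : ↥fixedᶜ) (y : ↥(π₀ '' fixed)ᶜ) => X i y) τ := by
  classical
  intro fixed
  let agree (π : C ≃ R) : Prop := ∀ i : fixed, π i = π₀.image fixed i
  let fills (π : C ≃ R) : Prop := ∀ i : ↥fixedᶜ, X i (π i)
  have hrefill (π : C ≃ R) : IsRefilling X π₀ π ↔ agree π ∧ fills π := by
    simp only [agree, fills, Subtype.forall, Set.mem_compl_iff, fixed, Set.mem_ofPred_eq, not_not]
    exact ⟨fun h => ⟨h.eq_of_notMem, h.mem_of_mem⟩, fun h => ⟨h.1, h.2⟩⟩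
  let restrict : {π // agree π} ≃ (↥fixedᶜ ≃ ↥(π₀ '' fixed)ᶜ) := Equiv.Set.compl (π₀.image fixed)
  have hmem (π : {π // agree π}) (i : C) (hi : X i (π.1 i)) : i ∈ fixedᶜ := fun hfix =>
    hfix ((π.2 ⟨i, hfix⟩).subst hi)
  calc
    _ = Nat.card {π // agree π ∧ fills π ∧ ¬ Contains X π τ} :=
      Nat.card_congr (Equiv.subtypeEquivRight fun π => by rw [hrefill, and_assoc])
    _ = Nat.card {π : {π // agree π} // fills π ∧ ¬ Contains X π.1 τ} :=
      (Nat.card_congr (Equiv.subtypeSubtypeEquivSubtypeInter agree _)).symm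
    _ = _ := Nat.card_congr (restrict.subtypeEquiv fun π =>
      and_congr Iff.rfl (not_congr (contains_subtype_iff (fun _ => rfl) (hmem π)).symm))

end Refilling

theorem card_le_card_of_classwise {X : Type*} [Finite X] {r : X → X → Prop} (hr : Equivalence r)
    {p q : X → Prop}
    (h : ∀ x₀, p x₀ → Nat.card {x // r x₀ x ∧ p x} ≤ Nat.card {x // r x₀ x ∧ q x}) :
    Nat.card {x // p x} ≤ Nat.card {x // q x} := by
  classical
  have := Fintype.ofFinite X
  let s : Setoid X := ⟨r, hr⟩
  have hsum (p : X → Prop) : Nat.card {x // p x} =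
      ∑ κ : Quotient s, Nat.card {x // κ = ⟦x⟧ ∧ p x} := by
    simp only [Nat.card_eq_fintype_card, Fintype.card_subtype]
    rw [Finset.card_eq_sum_card_fiberwise (f := Quotient.mk s) (t := Finset.univ) (by simp)]
    simp only [Finset.filter_filter, and_comm, eq_comm]
  rw [hsum p, hsum q]
  refine Finset.sum_le_sum fun κ _ => ?_
  by_cases hex : ∃ x₀, κ = ⟦x₀⟧ ∧ p x₀
  · obtain ⟨x₀, rfl, hp⟩ := hex
    simp only [Quotient.eq]
    exact h x₀ hp
  · have : IsEmpty {x // κ = ⟦x⟧ ∧ p x} := ⟨fun x => hex ⟨x.1, x.2⟩⟩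
    exact Nat.card_of_isEmpty.trans_le (Nat.zero_le _)

section ShadowClasses

variable {C R : Type*} [Preorder C] [Preorder R] [Finite C] {e : ℕ} {D : C → R → Prop}
  {π₀ π : C ≃ R} {γ : Equiv.Perm (Fin e)}

/-- A copy of `γ` with a moved dot can be traded for a copy further to the right, so the induction
is on the column, from right to left. -/
theorem IsRefilling.shadow_eq (hD : IsDiagram D) (h : IsRefilling (shadow D γ π₀) π₀ π) :
    shadow D γ π = shadow D γ π₀ := by
  ext i y
  constructor
  · intro hiy
    obtain h' | ⟨j, hij, hjy, hne⟩ := hiy.or_exists_ne π₀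
    · exact h'
    · exact hD.shadow γ π₀ hij.le hjy.le (h.mem_of_mem j (h.mem_of_ne hne))
  · induction i using WellFoundedGT.induction generalizing y with
    | ind i ih =>
      intro hiy
      obtain h' | ⟨j, hij, hjy, hne⟩ := hiy.or_exists_ne π
      · exact h'
      · exact hD.shadow γ π hij.le hjy.le (ih j hij _ (h.mem_of_ne hne.symm))

theorem equivalence_isRefilling_shadow (hD : IsDiagram D) (γ : Equiv.Perm (Fin e)) :
    Equivalence fun π₀ π : C ≃ R => IsRefilling (shadow D γ π₀) π₀ π where
  refl π := .refl _ π
  symm h := h.shadow_eq hD ▸ h.symm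
  trans h h' := h.trans (h.shadow_eq hD ▸ h')

end ShadowClasses

section Comparison

variable {C R : Type*} [LinearOrder C] [LinearOrder R] [Finite C] {k e : ℕ} {D : C → R → Prop}

theorem card_shadowClass_avoiding [Nonempty (Fin k)] (hD : IsDiagram D) {π₀ : C ≃ R}
    (h₀ : ∀ i, D i (π₀ i)) (τ : Equiv.Perm (Fin k)) (γ : Equiv.Perm (Fin e)) :
    Nat.card {π // IsRefilling (shadow D γ π₀) π₀ π ∧
        (∀ i, D i (π i)) ∧ ¬ Contains D π (blockSum τ γ)} =
      Nat.card {π // IsRefilling (shadow D γ π₀) π₀ π ∧ ¬ Contains (shadow D γ π₀) π τ} := by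
  refine Nat.card_congr (Equiv.subtypeEquivRight fun π => and_congr_right fun h => ?_)
  rw [contains_blockSum_iff hD, h.shadow_eq hD]
  exact and_iff_right (h.forall_mem_of_le (fun _ _ => And.left) h₀)

theorem IsDiagram.avoiderCard_blockSum_le {a c : ℕ} [Nonempty (Fin a)] [Nonempty (Fin c)]
    {α : Equiv.Perm (Fin a)} {β : Equiv.Perm (Fin c)}
    (h : ∀ (m : ℕ) (w : Fin m → ℕ), Monotone w →
      (∀ y : Fin m, (y : ℕ) + 1 ≤ w y ∧ w y ≤ m) → SYcard w α ≤ SYcard w β)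
    (hD : IsDiagram D) (γ : Equiv.Perm (Fin e)) :
    avoiderCard D (blockSum α γ) ≤ avoiderCard D (blockSum β γ) := by
  refine card_le_card_of_classwise (equivalence_isRefilling_shadow hD γ) fun π₀ h₀ => ?_
  simp only [card_shadowClass_avoiding hD h₀.1, card_isRefilling_avoiding]
  exact IsDiagram.avoiderCard_le h fun _ _ _ _ hji hyz => hD.shadow γ π₀ hji hyz

end Comparison

theorem stmt2 (a c e : ℕ) (α : Equiv.Perm (Fin a)) (β : Equiv.Perm (Fin c))
    (γ : Equiv.Perm (Fin e))
    (h : ∀ (m : ℕ) (w : Fin m → ℕ), Monotone w →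
      (∀ y : Fin m, (y : ℕ) + 1 ≤ w y ∧ w y ≤ m) → SYcard w α ≤ SYcard w β)
    (n : ℕ) (b : Fin n → ℕ) (hmono : Monotone b)
    (hb : ∀ y : Fin n, (y : ℕ) + 1 ≤ b y ∧ b y ≤ n) :
    SYcard b (blockSum α γ) ≤ SYcard b (blockSum β γ) := by
  have hD := isDiagram_cells hmono
  rw [SYcard_eq_avoiderCard, SYcard_eq_avoiderCard]
  rcases isEmpty_or_nonempty (Fin a) with _ | _
  · -- Here `(α|γ)` is `γ`, and whatever contains `(β|γ)` contains `γ`.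
    exact avoiderCard_le_of_contains_imp fun π hβ =>
      (contains_blockSum_iff_of_isEmpty hD).2 (hβ.right hD)
  rcases isEmpty_or_nonempty (Fin c) with _ | _
  · -- The empty diagram has a transversal avoiding the nonempty `α`, but none avoiding `β`.
    have hle := h 0 Fin.elim0 (fun i => i.elim0) (fun y => y.elim0)
    rw [(SYcard_fin_zero_eq_zero_iff _ β).2 inferInstance, Nat.le_zero,
      SYcard_fin_zero_eq_zero_iff] at hle
    exact absurd hle (not_isEmpty_of_nonempty _)
  exact hD.avoiderCard_blockSum_le h γ
end

section
/- For every k ≥ 1, every permutation τ ∈ S_k, and every n ≥ 2k + 5, the strict inequalities |S_n(213|τ)| < |S_n(123|τ)| < |S_n(312|τ)| hold, where S_n(σ) denotes the set of permutations of length n avoiding the pattern σ. -/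
open Equiv

/-!
Fix `τ`. A dot of a permutation is inner if there is a copy of `τ` to its lower right; only inner
dots can play a role in the block of `σ` of an occurrence of `(σ|τ)`. The cells with a copy of `τ`
to their lower right depend only on the dots that are not inner, so moving the inner dots within
these cells is an equivalence relation. An equivalence class is in bijection with the transversals
of a Young diagram, and a permutation in the class avoids `(σ|τ)` if and only if the transversal
avoids `σ` inside the diagram. Hence it suffices to show, for every Young diagram,

  `#213-avoiders ≤ #123-avoiders ≤ #312-avoiders`,

and to exhibit one class for which both inequalities are strict.

Build the transversals row by row from the bottom. For the pattern 123 the unused columns fall into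
blocks, each of which must be used from right to left, and using a column shortens its block and
merges all later blocks. The resulting count is symmetric in the block sizes, thanks to an exchange
identity, and therefore obeys a recursion in two parameters. The number of 132-avoiders is at most,
and the number of 321-avoiders at least, the value of that recursion. Reflection in the
antidiagonal exchanges 132 with 213 and fixes 123, which gives the first inequality. For the second
one, group the transversals by their left-to-right maxima, as in the argument of Bóna: a class
contains at most one 321-avoider and, if nonempty, at least one 312-avoider.

Both inequalities are strict for the square of side 5 with one corner cell removed, and for
`n ≥ 2k + 5` this is the diagram of the class of an explicit permutation.
-/
namespace ShapeWilf

section Diagrams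

variable {n : ℕ} {b : Fin n → ℕ} {π : Perm (Fin n)}

theorem forall_lt_iff_lt_iff_strictMono {α : Type*} [Preorder α] {k : ℕ} {σ : Perm (Fin k)}
    {g : Fin k → α} : (∀ s t, σ s < σ t ↔ g s < g t) ↔ StrictMono (g ∘ σ.symm) := by
  refine ⟨fun h s t hst => (h _ _).1 (by simpa using hst), fun h s t => ?_⟩
  rcases lt_trichotomy (σ s) (σ t) with hlt | heq | hgt
  · exact iff_of_true hlt (by simpa using h hlt)
  · rw [σ.injective heq]
    simp
  · exact iff_of_false hgt.not_gt (by simpa using (h hgt).not_gt)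

/-- The row lengths `b` (bottom row first) describe a Young diagram with at most `n` columns, drawn
with all rows flush left and the longest row on top. -/
structure IsYoungDiagram (b : Fin n → ℕ) : Prop where
  mono : Monotone b
  le : ∀ h, b h ≤ n

theorem exists_isYoungDiagram (Y : Fin n → Fin n → Prop)
    (hY : ∀ {i i' h h'}, i' ≤ i → h ≤ h' → Y i h → Y i' h') :
    ∃ b : Fin n → ℕ, IsYoungDiagram b ∧ ∀ i h : Fin n, (i : ℕ) + 1 ≤ b h ↔ Y i h := by
  classical
  refine ⟨fun h => (Finset.univ.filter (Y · h)).card, ⟨fun h h' hh => ?_, fun h => ?_⟩,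
    fun i h => ⟨fun hi => ?_, fun hi => ?_⟩⟩
  · exact Finset.card_le_card fun i => by simpa using hY le_rfl hh
  · simpa using Finset.card_le_univ (Finset.univ.filter (Y · h))
  · by_contra hY'
    have hsub : Finset.univ.filter (Y · h) ⊆ Finset.Iio i := fun j hj => by
      rw [Finset.mem_Iio]
      by_contra! hij
      exact hY' (hY hij le_rfl (by simpa using hj))
    have := Finset.card_le_card hsub
    rw [Fin.card_Iio] at this
    exact absurd hi (by simpa [Nat.lt_succ_iff] using this)
  · rw [← Fin.card_Iic]
    exact Finset.card_le_card fun j hj => by simpa using hY (Finset.mem_Iic.1 hj) le_rfl hi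

/-- The pattern `132`, the mirror image of `213` in the antidiagonal. -/
def p132 : Perm (Fin 3) := Equiv.swap 1 2

/-- Three dots in the columns `x`, `y`, `z`, listed from bottom to top, form the pattern `σ`. -/
def Forms (σ : Perm (Fin 3)) (x y z : ℕ) : Prop :=
  ![x, y, z] (σ 0) < ![x, y, z] (σ 1) ∧ ![x, y, z] (σ 1) < ![x, y, z] (σ 2)

instance (σ : Perm (Fin 3)) (x y z : ℕ) : Decidable (Forms σ x y z) :=
  inferInstanceAs (Decidable (_ ∧ _))

variable {x y z : ℕ}

theorem forms_p123 : Forms p123 x y z ↔ x < y ∧ y < z := Iff.rfl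

theorem forms_p132 : Forms p132 x y z ↔ x < z ∧ z < y := Iff.rfl

theorem forms_p312 : Forms p312 x y z ↔ z < x ∧ x < y := Iff.rfl

theorem forms_p321 : Forms p321 x y z ↔ z < y ∧ y < x := Iff.rfl

theorem containsIn_iff_exists_forms {σ : Perm (Fin 3)} (hb : Monotone b)
    (hπ : IsTransversal b π) :
    ContainsIn b π σ ↔ ∃ x y z : Fin n, π x < π y ∧ π y < π z ∧ Forms σ x y z ∧
      (y : ℕ) + 1 ≤ b (π x) ∧ (z : ℕ) + 1 ≤ b (π x) := by
  constructor
  · rintro ⟨f, hf, hord, hY⟩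
    have hrow := forall_lt_iff_lt_iff_strictMono (g := π ∘ f).1 hord
    have hvec : ∀ s, ![(f (σ.symm 0) : ℕ), f (σ.symm 1), f (σ.symm 2)] (σ s) = f s := fun s => by
      rw [← σ.symm_apply_apply s]
      generalize σ s = t
      fin_cases t <;> simp
    refine ⟨f (σ.symm 0), f (σ.symm 1), f (σ.symm 2), hrow (by decide), hrow (by decide), ?_,
      hY _ _, hY _ _⟩
    simp only [Forms, hvec]
    exact ⟨hf (by decide), hf (by decide)⟩
  · rintro ⟨x, y, z, hxy, hyz, ⟨h01, h12⟩, hy, hz⟩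
    have hvec : ∀ s, ![(x : ℕ), y, z] s = (![x, y, z] s : Fin n) := fun s => by
      fin_cases s <;> rfl
    have hrow : StrictMono (π ∘ ![x, y, z]) := Fin.strictMono_iff_lt_succ.2 fun i => by
      fin_cases i
      · exact hxy
      · exact hyz
    have hcell : ∀ s, ((![x, y, z] s : Fin n) : ℕ) + 1 ≤ b (π x) := fun s => by
      fin_cases s
      exacts [hπ x, hy, hz]
    refine ⟨![x, y, z] ∘ σ, Fin.strictMono_iff_lt_succ.2 fun i => ?_,
      forall_lt_iff_lt_iff_strictMono.2 ?_, fun s t => (hcell _).trans (hb ?_)⟩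
    · simp only [hvec] at h01 h12
      fin_cases i
      exacts [h01, h12]
    · simpa [Function.comp_def] using hrow
    · exact hrow.monotone (Fin.zero_le (σ t))

end Diagrams

section LeftToRightMaxima

variable {n : ℕ} {b : Fin n → ℕ} {π π' ρ : Perm (Fin n)} {i j : Fin n}

/-- The dot in column `i` is a left-to-right maximum: every dot to its left is lower. -/
def IsLeftMax (π : Perm (Fin n)) (i : Fin n) : Prop := ∀ j < i, π j < π i

theorem exists_isLeftMax (hi : ¬ IsLeftMax π i) : ∃ m < i, IsLeftMax π m ∧ π i < π m := by
  simp only [IsLeftMax, not_forall, not_lt] at hi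
  obtain ⟨j, hji, hij⟩ := hi
  obtain ⟨m, hm, hmax⟩ := (Finset.Iio i).exists_max_image π ⟨j, Finset.mem_Iio.2 hji⟩
  simp only [Finset.mem_Iio] at hm hmax
  refine ⟨m, hm, fun u hu => ?_, ?_⟩
  · exact (hmax u (hu.trans hm)).lt_of_ne (π.injective.ne hu.ne)
  · exact (hij.trans (hmax j hji)).lt_of_ne (π.injective.ne hm.ne).symm

/-- `π'` is a transversal of `b` with the same left-to-right maxima as `π`, in the same cells. -/
structure InMaxClass (b : Fin n → ℕ) (π π' : Perm (Fin n)) : Prop where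
  isTransversal : IsTransversal b π'
  eq : ∀ {i}, IsLeftMax π i → π' i = π i
  exists_lt : ∀ {i}, ¬ IsLeftMax π i → ∃ m < i, IsLeftMax π m ∧ π' i < π m

theorem InMaxClass.refl (hπ : IsTransversal b π) : InMaxClass b π π :=
  ⟨hπ, fun _ => rfl, exists_isLeftMax⟩

theorem InMaxClass.isLeftMax_iff (h : InMaxClass b π π') : IsLeftMax π' i ↔ IsLeftMax π i := by
  refine ⟨fun hi => ?_, fun hi j hj => ?_⟩
  · by_contra hn
    obtain ⟨m, hmi, hm, hlt⟩ := h.exists_lt hn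
    exact lt_asymm hlt (h.eq hm ▸ hi m hmi)
  · rw [h.eq hi]
    by_cases hj' : IsLeftMax π j
    · exact h.eq hj' ▸ hi j hj
    · obtain ⟨m, hmj, -, hlt⟩ := h.exists_lt hj'
      exact hlt.trans (hi m (hmj.trans hj))

theorem InMaxClass.mul_swap (hb : Monotone b) (h : InMaxClass b π π') (hij : i < j)
    (hlt : π' i < π' j) (hcell : (j : ℕ) + 1 ≤ b (π' i))
    (hm : ∃ m < i, IsLeftMax π m ∧ π' j < π m) : InMaxClass b π (π' * swap i j) := by
  obtain ⟨m, hmi, hmax, hjm⟩ := hm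
  have hne : ∀ {s}, IsLeftMax π s → s ≠ i ∧ s ≠ j := fun hs => by
    constructor
    · rintro rfl
      exact lt_asymm (hlt.trans hjm) (h.eq hs ▸ hs m hmi)
    · rintro rfl
      exact lt_asymm hjm (h.eq hs ▸ hs m (hmi.trans hij))
  refine ⟨fun s => ?_, fun {s} hs => ?_, fun {s} hs => ?_⟩
  · rw [Perm.mul_apply]
    rcases eq_or_ne s i with rfl | hsi
    · simpa using (h.isTransversal s).trans (hb hlt.le)
    rcases eq_or_ne s j with rfl | hsj
    · simpa using hcell
    · simpa [swap_apply_of_ne_of_ne hsi hsj] using h.isTransversal s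
  · simpa [swap_apply_of_ne_of_ne (hne hs).1 (hne hs).2] using h.eq hs
  · rw [Perm.mul_apply]
    rcases eq_or_ne s i with rfl | hsi
    · exact ⟨m, hmi, hmax, by simpa using hjm⟩
    rcases eq_or_ne s j with rfl | hsj
    · exact ⟨m, hmi.trans hij, hmax, by simpa using hlt.trans hjm⟩
    · simpa [swap_apply_of_ne_of_ne hsi hsj] using h.exists_lt hs

/- The lexicographic maximum of the class avoids `312`: exchanging the two lower dots of an
occurrence would stay in the class and increase the transversal. -/
theorem exists_inMaxClass_not_containsIn_p312 (hb : Monotone b) (hπ : IsTransversal b π) :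
    ∃ π', InMaxClass b π π' ∧ ¬ ContainsIn b π' p312 := by
  have : Nonempty {π' // InMaxClass b π π'} := ⟨⟨π, .refl hπ⟩⟩
  obtain ⟨⟨π', h⟩, hmax⟩ := Finite.exists_max
    fun π' : {π' // InMaxClass b π π'} => toLex (π'.1 : Fin n → Fin n)
  refine ⟨π', h, fun hcon => ?_⟩
  obtain ⟨x, y, z, hxy, hyz, hform, hy, -⟩ :=
    (containsIn_iff_exists_forms hb h.isTransversal).1 hcon
  obtain ⟨hzx : z < x, hxy' : x < y⟩ := forms_p312.1 hform
  have hm : ∃ m < x, IsLeftMax π m ∧ π' y < π m := by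
    by_cases hz : IsLeftMax π z
    · exact ⟨z, hzx, hz, h.eq hz ▸ hyz⟩
    · obtain ⟨m, hmz, hm, hlt⟩ := h.exists_lt hz
      exact ⟨m, hmz.trans hzx, hm, hyz.trans hlt⟩
  refine (hmax ⟨_, h.mul_swap hb hxy' hxy hy hm⟩).not_gt ⟨x, fun j hj => ?_, ?_⟩
  · simp [swap_apply_of_ne_of_ne hj.ne (hj.trans hxy').ne]
  · simpa using hxy

theorem lt_of_not_containsIn_p321 (hb : Monotone b) (hπ : IsTransversal b π)
    (hav : ¬ ContainsIn b π p321) (hi : ¬ IsLeftMax π i) (hij : i < j) : π i < π j := by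
  by_contra! hji
  obtain ⟨m, hmi, -, him⟩ := exists_isLeftMax hi
  refine hav ((containsIn_iff_exists_forms hb hπ).2
    ⟨j, i, m, hji.lt_of_ne (π.injective.ne hij.ne'), him, forms_p321.2 ⟨hmi, hij⟩, ?_, ?_⟩)
  · exact le_trans (by simpa using hij.le) (hπ j)
  · exact le_trans (by simpa using (hmi.trans hij).le) (hπ j)

theorem eq_of_eqOn_of_strictMonoOn_compl {s : Set (Fin n)} (heq : Set.EqOn π ρ s)
    (hπ : StrictMonoOn π sᶜ) (hρ : StrictMonoOn ρ sᶜ) : π = ρ := by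
  -- At the first disagreement, the smaller of the two values has been skipped for good.
  have hle : ∀ {π ρ : Perm (Fin n)}, Set.EqOn π ρ s → StrictMonoOn ρ sᶜ →
      ∀ {i}, (∀ j < i, π j = ρ j) → ρ i ≤ π i := by
    intro π ρ heq hρ i ih
    by_contra! hlt
    have hi : i ∉ s := fun hi => hlt.ne (heq hi)
    obtain ⟨u, hu⟩ := ρ.surjective (π i)
    have hui : u ≠ i := fun h => hlt.ne (by rw [← hu, h])
    have hus : u ∉ s := fun h => hui (π.injective ((heq h).trans hu))
    rcases hui.lt_or_gt with h | h
    · exact hui (π.injective ((ih u h).trans hu))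
    · exact lt_asymm hlt (hu ▸ hρ hi hus h)
  refine Equiv.ext fun i => ?_
  induction i using WellFoundedLT.induction with
  | ind i ih => exact le_antisymm (hle heq.symm hπ fun j hj => (ih j hj).symm) (hle heq hρ ih)

theorem SYcard_p321_le_p312 (hb : Monotone b) : SYcard b p321 ≤ SYcard b p312 := by
  choose φ hφ hφ' using fun π : {π // IsTransversal b π ∧ ¬ ContainsIn b π p321} =>
    exists_inMaxClass_not_containsIn_p312 hb π.2.1
  refine Nat.card_le_card_of_injective (fun π => ⟨φ π, (hφ π).isTransversal, hφ' π⟩)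
    fun π ρ h => Subtype.ext ?_
  replace h : φ π = φ ρ := congrArg Subtype.val h
  have hmax : ∀ i, IsLeftMax π.1 i ↔ IsLeftMax ρ.1 i := fun i => by
    rw [← (hφ π).isLeftMax_iff, ← (hφ ρ).isLeftMax_iff, h]
  refine eq_of_eqOn_of_strictMonoOn_compl (s := {i | IsLeftMax π.1 i}) (fun i hi => ?_)
    (fun i hi j _ => lt_of_not_containsIn_p321 hb π.2.1 π.2.2 hi)
    (fun i hi j _ => lt_of_not_containsIn_p321 hb ρ.2.1 ρ.2.2 (mt (hmax i).2 hi))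
  rw [← (hφ π).eq hi, h, (hφ ρ).eq ((hmax i).1 hi)]

end LeftToRightMaxima

section BlockCount

variable {f : List ℕ → ℕ} {l l' : List ℕ}

/-- The sum of `f` over all lists obtained from a list of block sizes by decreasing one nonempty
block by one and merging all later blocks into a single one. -/
def closeSum : (List ℕ → ℕ) → List ℕ → ℕ
  | _, [] => 0
  | f, c :: cs => (if c = 0 then 0 else f [c - 1, cs.sum]) + closeSum (fun l => f (c :: l)) cs

/-- The number of ways to process the list `ds` from the block sizes `c`, where an entry `d` stands
for appending `d` blocks of size one followed by one step of `closeSum`. -/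
def blockCount : List ℕ → List ℕ → ℕ
  | [], _ => 1
  | d :: ds, c => closeSum (blockCount ds) (c ++ List.replicate d 1)

/-- The number `blockCount ds c` in terms of the total size `t` of the blocks and the number `r` of
nonempty blocks, valid when the blocks are singletons followed by at most one larger block. -/
def rankCount : List ℕ → ℕ → ℕ → ℕ
  | [], _, _ => 1
  | d :: ds, t, r => ∑ i ∈ Finset.range (r + d), rankCount ds (t + d - 1) (min (i + 1) (t + d - 1))

/-- A function of lists of block sizes that is symmetric, ignores empty blocks, and satisfies an
exchange identity expressing that `closeSum` preserves the symmetry. -/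
structure IsExchangeable (f : List ℕ → ℕ) : Prop where
  perm : ∀ {l l'}, l.Perm l' → f l = f l'
  zero_cons : ∀ l, f (0 :: l) = f l
  exchange : ∀ x y s l, f (x :: (y + 1 + s) :: l) + f ((x + 1) :: y :: s :: l) =
    f (y :: (x + 1 + s) :: l) + f ((y + 1) :: x :: s :: l)

namespace IsExchangeable

theorem cons (hf : IsExchangeable f) (c : ℕ) : IsExchangeable (fun l => f (c :: l)) where
  perm hl := hf.perm (hl.cons c)
  zero_cons l := by rw [hf.perm (.swap 0 c l), hf.zero_cons]
  exchange x y s l := by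
    have hpair : ∀ u v, f (c :: u :: v :: l) = f (u :: v :: c :: l) := fun u v =>
      (hf.perm (List.perm_middle (l₁ := [u, v]))).symm
    have htriple : ∀ u v w, f (c :: u :: v :: w :: l) = f (u :: v :: w :: c :: l) := fun u v w =>
      (hf.perm (List.perm_middle (l₁ := [u, v, w]))).symm
    simpa only [hpair, htriple] using hf.exchange x y s (c :: l)

theorem cons_zero_cons (hf : IsExchangeable f) (c : ℕ) : f (c :: 0 :: l) = f (c :: l) :=
  (hf.cons c).zero_cons l

theorem swap (hf : IsExchangeable f) (c d : ℕ) : f (c :: d :: l) = f (d :: c :: l) :=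
  hf.perm (.swap d c l)

theorem exchange_block (hf : IsExchangeable f) (x y s : ℕ) (l : List ℕ) :
    f (x :: (y + s) :: l) + (if s = 0 then 0 else f ((x + 1) :: y :: (s - 1) :: l)) =
      f (y :: (x + s) :: l) + (if s = 0 then 0 else f ((y + 1) :: x :: (s - 1) :: l)) := by
  rcases s with _ | s
  · simpa using hf.swap x y
  · simpa [Nat.add_right_comm _ 1 s, ← add_assoc] using hf.exchange x y s l

theorem exchange_ends (hf : IsExchangeable f) (x y t : ℕ) :
    (if x = 0 then 0 else f [x - 1, y + 1 + t]) + f [x, y + t] +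
        (if y = 0 then 0 else f [x + 1, y - 1, t]) =
      (if y = 0 then 0 else f [y - 1, x + 1 + t]) + f [y, x + t] +
        (if x = 0 then 0 else f [y + 1, x - 1, t]) := by
  rcases x with _ | x <;> rcases y with _ | y
  · simp
  · have h := hf.exchange 0 y t []
    simp only [hf.zero_cons, hf.cons_zero_cons, if_true, Nat.add_eq_zero_iff, one_ne_zero,
      and_false, if_false, Nat.add_sub_cancel, zero_add] at h ⊢
    omega
  · have h := hf.exchange x 0 t []
    simp only [hf.zero_cons, hf.cons_zero_cons, if_true, Nat.add_eq_zero_iff, one_ne_zero,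
      and_false, if_false, Nat.add_sub_cancel, zero_add] at h ⊢
    omega
  · have hx := hf.exchange x (y + 1) t []
    have hy := hf.exchange y (x + 1) t []
    have hswap := hf.swap (l := [t]) (x + 1) (y + 1)
    simp only [Nat.add_eq_zero_iff, one_ne_zero, and_false, if_false, Nat.add_sub_cancel]
    omega

end IsExchangeable

theorem closeSum_add (f g : List ℕ → ℕ) (l : List ℕ) :
    closeSum f l + closeSum g l = closeSum (fun l => f l + g l) l := by
  induction l generalizing f g with
  | nil => rfl
  | cons c cs ih =>
    simp only [closeSum, ← ih]
    split_ifs <;> ring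

theorem closeSum_perm (hf : IsExchangeable f) (hl : l.Perm l') :
    closeSum f l = closeSum f l' := by
  induction hl generalizing f with
  | nil => rfl
  | cons c hl ih => simp only [closeSum, hl.sum_eq, ih (hf.cons c)]
  | swap c d l =>
    simp only [closeSum, List.sum_cons, fun m => hf.swap (l := m) d c]
    rcases c with _ | c <;> rcases d with _ | d
    · simp
    · simp [hf.zero_cons]
    · simp [hf.zero_cons]
    · have := hf.exchange d c l.sum []
      simp only [Nat.add_eq_zero_iff, one_ne_zero, and_false, if_false, Nat.add_sub_cancel]
      omega
  | trans _ _ ih₁ ih₂ => rw [ih₁ hf, ih₂ hf]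

theorem isExchangeable_closeSum (hf : IsExchangeable f) : IsExchangeable (closeSum f) where
  perm := closeSum_perm hf
  zero_cons l := by simp [closeSum, hf.zero_cons]
  exchange x y s l := by
    -- The terms are matched by the block that is closed: `x` or `y`, or `s`, or one in `l`.
    have hends := hf.exchange_ends x y (s + l.sum)
    have hblock := hf.exchange_block x y s [l.sum]
    have hrest := congrArg (closeSum · l) (funext fun m => hf.exchange x y s m)
    simp only [← closeSum_add] at hrest
    simp only [closeSum, List.sum_cons, Nat.add_eq_zero_iff, one_ne_zero, and_false,
      if_false, Nat.add_sub_cancel, Nat.add_right_comm _ 1 s, ← add_assoc] at hends hblock hrest ⊢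
    omega

theorem isExchangeable_blockCount (ds : List ℕ) : IsExchangeable (blockCount ds) := by
  induction ds with
  | nil => exact ⟨fun _ => rfl, fun _ => rfl, fun _ _ _ _ => rfl⟩
  | cons d ds ih =>
    have h := isExchangeable_closeSum ih
    exact ⟨fun hl => h.perm (hl.append_right _), fun l => h.zero_cons _,
      fun x y s l => h.exchange x y s _⟩

theorem closeSum_replicate_append (hf : IsExchangeable f) (m j : ℕ) :
    closeSum f (List.replicate m 1 ++ [j]) =
      ∑ i ∈ Finset.range m, f (List.replicate i 1 ++ [m - 1 - i + j]) +
        (if j = 0 then 0 else f (List.replicate m 1 ++ [j - 1])) := by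
  induction m generalizing f with
  | zero => simp [closeSum, hf.cons_zero_cons]
  | succ m ih =>
    have hsub : ∀ i, m - 1 - i = m - (i + 1) := fun i => by omega
    rw [List.replicate_succ, List.cons_append, closeSum, ih (hf.cons 1), Finset.sum_range_succ']
    simp only [one_ne_zero, if_false, Nat.sub_self, hf.zero_cons, List.sum_append,
      List.sum_replicate, List.sum_singleton, smul_eq_mul, mul_one, Nat.add_sub_cancel, hsub,
      List.replicate_succ, List.replicate_zero, List.cons_append, List.nil_append, Nat.sub_zero]
    omega

/- By symmetry newly opened singletons may be moved to the front, which keeps the blocks in the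
shape of singletons followed by one arbitrary block. -/
theorem blockCount_replicate_append (ds : List ℕ) (m j : ℕ) :
    blockCount ds (List.replicate m 1 ++ [j]) = rankCount ds (m + j) (m + min j 1) := by
  induction ds generalizing m j with
  | nil => rfl
  | cons d ds ih =>
    have hperm : (List.replicate m 1 ++ [j] ++ List.replicate d 1).Perm
        (List.replicate (m + d) 1 ++ [j]) := by
      rw [List.replicate_add, List.append_assoc, List.append_assoc]
      exact List.perm_append_comm.append_left _
    rw [blockCount, closeSum_perm (isExchangeable_blockCount ds) hperm,
      closeSum_replicate_append (isExchangeable_blockCount ds), rankCount]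
    simp only [ih]
    rcases j with _ | j
    · simp only [if_true, add_zero, Nat.zero_min]
      refine Finset.sum_congr rfl fun i hi => ?_
      have := Finset.mem_range.1 hi
      congr 1 <;> omega
    · rw [if_neg j.succ_ne_zero, show m + min (j + 1) 1 + d = m + d + 1 by omega,
        Finset.sum_range_succ]
      congr 1
      · refine Finset.sum_congr rfl fun i hi => ?_
        have := Finset.mem_range.1 hi
        congr 1 <;> omega
      · congr 1 <;> omega

theorem blockCount_nil (ds : List ℕ) : blockCount ds [] = rankCount ds 0 0 := by
  rw [← (isExchangeable_blockCount ds).zero_cons]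
  exact blockCount_replicate_append ds 0 0

end BlockCount

section Fillings

variable {m : ℕ} {σ : Perm (Fin 3)} {b : Fin m → ℕ} {b₀ x y z : ℕ} {A : Finset ℕ}
  {K : ℕ → ℕ → Prop}

/-- `p` assigns to each row a column from `A`, each column being used once, such that the dot of
row `i` is one of the `b i` leftmost cells, no two dots in the columns `y`, `z` with `K y z` occur
in this order from bottom to top, and no three dots form the pattern `σ` inside the diagram. -/
def IsFilling (σ : Perm (Fin 3)) (b : Fin m → ℕ) (A : Finset ℕ) (K : ℕ → ℕ → Prop)
    (p : Fin m → ℕ) : Prop :=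
  p.Injective ∧ Set.range p = A ∧ (∀ i, p i < b i) ∧ (∀ i j, i < j → ¬ K (p i) (p j)) ∧
    ∀ i j l, i < j → j < l → p j < b i → p l < b i → ¬ Forms σ (p i) (p j) (p l)

/-- The number of fillings of the rows `b` with the columns in `A`, see `IsFilling`. -/
noncomputable def fillCount (σ : Perm (Fin 3)) (b : Fin m → ℕ) (A : Finset ℕ)
    (K : ℕ → ℕ → Prop) : ℕ :=
  Nat.card {p // IsFilling σ b A K p}

open Classical in
/-- The columns in `A` that may be used in a lowest row of length `b`, given that `K x z` forbids
using `x` before `z`. -/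
noncomputable def closable (A : Finset ℕ) (b : ℕ) (K : ℕ → ℕ → Prop) : Finset ℕ :=
  A.filter fun x => x < b ∧ ∀ z ∈ A, z ≠ x → ¬ K x z

/-- The pairs of columns that are forbidden once the column `x` has been used in a row of length
`b`, given that the pairs in `K` were forbidden before. -/
def forbidAfter (σ : Perm (Fin 3)) (K : ℕ → ℕ → Prop) (b x y z : ℕ) : Prop :=
  K y z ∨ (y < b ∧ z < b ∧ Forms σ x y z)

theorem mem_closable {b : ℕ} :
    x ∈ closable A b K ↔ x ∈ A ∧ x < b ∧ ∀ z ∈ A, z ≠ x → ¬ K x z := by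
  simp [closable]

theorem insert_range_eq_iff {p : Fin m → ℕ} (hx : x ∉ Set.range p) :
    insert x (Set.range p) = (A : Set ℕ) ↔ x ∈ A ∧ Set.range p = (A.erase x : Finset ℕ) := by
  rw [Finset.coe_erase]
  refine ⟨fun h => ⟨?_, ?_⟩, fun ⟨hxA, h⟩ => ?_⟩
  · exact_mod_cast h ▸ Set.mem_insert x _
  · rw [← h, Set.insert_sdiff_self_of_notMem hx]
  · rw [h, Set.insert_sdiff_singleton, Set.insert_eq_of_mem (by exact_mod_cast hxA)]

theorem isFilling_cons {b : Fin (m + 1) → ℕ} {p : Fin m → ℕ} :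
    IsFilling σ b A K (Fin.cons x p) ↔ x ∈ closable A (b 0) K ∧
      IsFilling σ (Fin.tail b) (A.erase x) (forbidAfter σ K (b 0) x) p := by
  by_cases hx : x ∈ Set.range p
  · refine iff_of_false (fun h => (Fin.cons_injective_iff.1 h.1).1 hx) fun h => ?_
    exact Finset.notMem_erase x A (by exact_mod_cast h.2.2.1 ▸ hx)
  have hmem : Set.range p = (A.erase x : Finset ℕ) → ((∀ z ∈ A, z ≠ x → ¬ K x z) ↔
      ∀ j, ¬ K x (p j)) := fun h => by
    rw [← Set.forall_mem_range (p := fun z => ¬ K x z), h]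
    simp [and_imp, imp.swap (a := _ ∈ A)]
  simp only [IsFilling, mem_closable, forbidAfter, Fin.cons_injective_iff, Fin.range_cons,
    insert_range_eq_iff hx, Fin.forall_fin_succ, Fin.cons_zero, Fin.cons_succ, Fin.tail,
    Fin.succ_lt_succ_iff, Fin.succ_pos, Fin.not_lt_zero, false_imp_iff, true_imp_iff,
    true_and, implies_true, not_or, not_and]
  constructor
  · rintro ⟨⟨-, hinj⟩, ⟨hxA, hr⟩, ⟨h0, hlt⟩, ⟨hK0, hK⟩, hF0, hF⟩
    exact ⟨⟨hxA, h0, (hmem hr).2 hK0⟩, hinj, hr, hlt,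
      fun i j hij => ⟨hK i j hij, hF0 i j hij⟩, hF⟩
  · rintro ⟨⟨hxA, h0, hK0⟩, hinj, hr, hlt, hK, hF⟩
    exact ⟨⟨hx, hinj⟩, ⟨hxA, hr⟩, ⟨h0, hlt⟩, ⟨(hmem hr).1 hK0, fun i j hij => (hK i j hij).1⟩,
      fun i j hij => (hK i j hij).2, hF⟩

instance : Finite {p // IsFilling σ b A K p} :=
  Finite.of_injective (β := Fin m → A)
    (fun p i => ⟨p.1 i, by exact_mod_cast p.2.2.1 ▸ Set.mem_range_self i⟩) fun _ _ h =>
      Subtype.ext (funext fun i => congrArg Subtype.val (congrFun h i))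

theorem fillCount_zero (b : Fin 0 → ℕ) : fillCount σ b ∅ K = 1 :=
  Nat.card_eq_one_iff_unique.2
    ⟨⟨fun _ _ => Subtype.ext (Subsingleton.elim _ _)⟩,
      ⟨Fin.elim0, by simp [IsFilling, Function.Injective]⟩⟩

theorem fillCount_succ (b : Fin (m + 1) → ℕ) : fillCount σ b A K = ∑ x ∈ closable A (b 0) K,
    fillCount σ (Fin.tail b) (A.erase x) (forbidAfter σ K (b 0) x) := by
  have hsplit (p) (hp : IsFilling σ b A K p) :=
    isFilling_cons.1 ((Fin.cons_self_tail p).symm ▸ hp)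
  rw [← Finset.sum_coe_sort]
  simp_rw [fillCount]
  rw [← Nat.card_sigma]
  exact Nat.card_congr
    { toFun p := ⟨⟨p.1 0, (hsplit _ p.2).1⟩, ⟨Fin.tail p.1, (hsplit _ p.2).2⟩⟩
      invFun q := ⟨Fin.cons q.1.1 q.2.1, isFilling_cons.2 ⟨q.1.2, q.2.2⟩⟩
      left_inv p := by simp
      right_inv q := rfl }

variable {n : ℕ} {b : Fin n → ℕ}

theorem isFilling_symm_iff (hb : Monotone b) (π : Perm (Fin n)) :
    IsFilling σ b (Finset.range n) (fun _ _ => False) (fun i => π.symm i) ↔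
      IsTransversal b π ∧ ¬ ContainsIn b π σ := by
  have hinj : Function.Injective fun i => (π.symm i : ℕ) :=
    Fin.val_injective.comp π.symm.injective
  have hrange : (Set.range fun i => (π.symm i : ℕ)) = (Finset.range n : Set ℕ) := by
    rw [Finset.coe_range, ← Fin.range_val]
    exact π.symm.surjective.range_comp Fin.val
  have htrans : (∀ i, (π.symm i : ℕ) < b i) ↔ IsTransversal b π :=
    ⟨fun h i => by simpa using h (π i), fun h i => by simpa using h (π.symm i)⟩
  simp only [IsFilling, hinj, hrange, htrans, true_and, not_false_eq_true, implies_true]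
  refine and_congr_right fun hπ => ?_
  rw [containsIn_iff_exists_forms hb hπ]
  constructor
  · rintro h ⟨x, y, z, hxy, hyz, hform, hy, hz⟩
    exact h (π x) (π y) (π z) hxy hyz (by simpa using hy) (by simpa using hz) (by simpa using hform)
  · exact fun h i j l hij hjl hj hl hform => h ⟨π.symm i, π.symm j, π.symm l, by simpa using hij,
      by simpa using hjl, hform, by simpa using hj, by simpa using hl⟩

theorem SYcard_eq_fillCount (hb : IsYoungDiagram b) :
    SYcard b σ = fillCount σ b (Finset.range n) fun _ _ => False := by
  have hlt : ∀ p, IsFilling σ b (Finset.range n) (fun _ _ => False) p → ∀ i, p i < n :=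
    fun p hp i => Finset.mem_range.1 (by exact_mod_cast hp.2.1 ▸ Set.mem_range_self i)
  have hiff := isFilling_symm_iff (σ := σ) hb.mono
  refine Nat.card_eq_of_bijective (fun π => ⟨fun i => π.1.symm i, (hiff π.1).2 π.2⟩)
    ⟨fun π ρ h => ?_, fun ⟨p, hp⟩ => ?_⟩
  · refine Subtype.ext (Equiv.symm_bijective.1 (Equiv.ext fun i => Fin.ext ?_))
    exact congrFun (congrArg Subtype.val h) i
  · have hinj : Function.Injective fun i => (⟨p i, hlt p hp i⟩ : Fin n) :=
      fun i j h => hp.1 (congrArg Fin.val h)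
    exact ⟨⟨(Equiv.ofBijective _ (Finite.injective_iff_bijective.1 hinj)).symm,
      (hiff _).1 (by simpa using hp)⟩, by simp⟩

end Fillings

section RowByRow

variable {m : ℕ} {σ : Perm (Fin 3)} {b : Fin m → ℕ} {b₀ q r x : ℕ} {A : Finset ℕ}
  {K : ℕ → ℕ → Prop}

/-- The numbers of columns newly opened by the rows `b`, if the columns `< b₀` are already open. -/
def increments : {m : ℕ} → ℕ → (Fin m → ℕ) → List ℕ
  | 0, _, _ => []
  | _ + 1, b₀, b => (b 0 - b₀) :: increments (b 0) (Fin.tail b)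

/-- The situation in which all rows below the rows `b` have been filled: the previous row consisted
of the columns `< b₀`, the unused columns are those in `A`, and `K` is the set of forbidden
pairs. -/
structure IsState (b₀ : ℕ) (b : Fin m → ℕ) (A : Finset ℕ) (K : ℕ → ℕ → Prop) : Prop where
  le : ∀ i, b₀ ≤ b i
  mono : Monotone b
  card : A.card = m
  subset : ∀ i, Finset.Ico b₀ (b i) ⊆ A
  lt : ∀ {y z}, K y z → y < b₀ ∧ z < b₀

theorem isState_zero {n : ℕ} {b : Fin n → ℕ} (hb : IsYoungDiagram b) :
    IsState 0 b (Finset.range n) fun _ _ => False where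
  le _ := Nat.zero_le _
  mono := hb.mono
  card := Finset.card_range n
  subset i _ hx := Finset.mem_range.2 ((Finset.mem_Ico.1 hx).2.trans_le (hb.le i))
  lt := False.elim

theorem IsState.step {b : Fin (m + 1) → ℕ} (h : IsState b₀ b A K) (hxA : x ∈ A)
    (hx : x < b 0) : IsState (b 0) (Fin.tail b) (A.erase x) (forbidAfter σ K (b 0) x) where
  le i := h.mono (Fin.zero_le _)
  mono i j hij := h.mono (Fin.succ_le_succ_iff.2 hij)
  card := by rw [Finset.card_erase_of_mem hxA, h.card, Nat.add_sub_cancel]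
  subset i y hy := by
    obtain ⟨h0, hi⟩ := Finset.mem_Ico.1 hy
    exact Finset.mem_erase.2 ⟨(hx.trans_le h0).ne',
      h.subset i.succ (Finset.mem_Ico.2 ⟨(h.le 0).trans h0, hi⟩)⟩
  lt := by
    rintro y z (hK | ⟨hy, hz, -⟩)
    · exact (h.lt hK).imp (·.trans_le (h.le 0)) (·.trans_le (h.le 0))
    · exact ⟨hy, hz⟩

theorem IsState.card_filter_lt {b : Fin (m + 1) → ℕ} (h : IsState b₀ b A K) :
    (A.filter (· < b 0)).card = (A.filter (· < b₀)).card + (b 0 - b₀) := by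
  have hdisj : Disjoint (A.filter (· < b₀)) (Finset.Ico b₀ (b 0)) := by
    simp only [Finset.disjoint_left, Finset.mem_filter, Finset.mem_Ico]
    omega
  have hunion : A.filter (· < b 0) = A.filter (· < b₀) ∪ Finset.Ico b₀ (b 0) := by
    ext x
    have hle := h.le 0
    have hsub := @h.subset 0 x
    simp only [Finset.mem_Ico, Finset.mem_filter, Finset.mem_union] at hsub ⊢
    grind
  rw [hunion, Finset.card_union_of_disjoint hdisj, Nat.card_Ico]

theorem card_filter_lt_erase {b : ℕ} (hxA : x ∈ A) (hx : x < b) :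
    ((A.erase x).filter (· < b)).card = (A.filter (· < b)).card - 1 := by
  rw [Finset.filter_erase, Finset.card_erase_of_mem (Finset.mem_filter.2 ⟨hxA, hx⟩)]

theorem IsState.card_closable {b : Fin (m + 1) → ℕ} (h : IsState b₀ b A K) :
    (closable A (b 0) K).card = (closable A b₀ K).card + (b 0 - b₀) := by
  have hdisj : Disjoint (closable A b₀ K) (Finset.Ico b₀ (b 0)) := by
    simp only [Finset.disjoint_left, mem_closable, Finset.mem_Ico]
    omega
  have hunion : closable A (b 0) K = closable A b₀ K ∪ Finset.Ico b₀ (b 0) := by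
    ext x
    have hle := h.le 0
    have hsub := @h.subset 0 x
    have hlt := fun z (hxz : K x z) => (h.lt hxz).1
    simp only [Finset.mem_Ico, mem_closable, Finset.mem_union] at hsub ⊢
    grind
  rw [hunion, Finset.card_union_of_disjoint hdisj, Nat.card_Ico]

theorem sum_card_filter_lt {α M : Type*} [LinearOrder α] [AddCommMonoid M] (S : Finset α)
    (g : ℕ → M) : ∑ x ∈ S, g (S.filter (· < x)).card = ∑ i ∈ Finset.range S.card, g i := by
  induction S using Finset.induction_on_max with
  | empty => simp
  | insert a S ha ih =>
    have haS : a ∉ S := fun h => (ha a h).false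
    rw [Finset.sum_insert haS, Finset.card_insert_of_notMem haS, Finset.sum_range_succ, ← ih,
      add_comm, Finset.filter_insert, if_neg (lt_irrefl a), Finset.filter_true_of_mem ha]
    congr 1
    refine Finset.sum_congr rfl fun x hx => ?_
    rw [Finset.filter_insert, if_neg (ha x hx).not_gt]

theorem sum_card_filter_gt {α M : Type*} [LinearOrder α] [AddCommMonoid M] (S : Finset α)
    (g : ℕ → M) : ∑ x ∈ S, g (S.filter (x < ·)).card = ∑ i ∈ Finset.range S.card, g i :=
  sum_card_filter_lt (α := αᵒᵈ) S g

/- After `x` has been used, only one column to its right, namely the leftmost one, can be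
closable. -/
theorem card_closable_forbidAfter_p132_le {b : ℕ} (hK : ∀ {y z}, K y z → z < y) :
    (closable (A.erase x) b (forbidAfter p132 K b x)).card ≤
      ((closable A b K).filter (· < x)).card + 1 := by
  set C := closable (A.erase x) b (forbidAfter p132 K b x)
  have hleft : C.filter (· < x) ⊆ (closable A b K).filter (· < x) := fun y hy => by
    obtain ⟨hyC, hyx⟩ := Finset.mem_filter.1 hy
    obtain ⟨hyA, hyb, hyz⟩ := mem_closable.1 hyC
    refine Finset.mem_filter.2
      ⟨mem_closable.2 ⟨Finset.mem_of_mem_erase hyA, hyb, fun z hz hzy hKz => ?_⟩, hyx⟩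
    exact hyz z (Finset.mem_erase.2 ⟨((hK hKz).trans hyx).ne, hz⟩) hzy (Or.inl hKz)
  have hright : (C.filter (¬ · < x)).card ≤ 1 := by
    have hnot : ∀ y ∈ C, ∀ z ∈ C, ¬ z < x → ¬ z < y := fun y hy z hz hzx hzy => by
      obtain ⟨-, hyb, hyz⟩ := mem_closable.1 hy
      obtain ⟨hzA, hzb, -⟩ := mem_closable.1 hz
      have hne := Finset.ne_of_mem_erase hzA
      exact hyz z hzA hzy.ne (Or.inr ⟨hyb, hzb, forms_p132.2 ⟨by omega, hzy⟩⟩)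
    refine Finset.card_le_one.2 fun y hy z hz => ?_
    rw [Finset.mem_filter] at hy hz
    exact le_antisymm (not_lt.1 (hnot y hy.1 z hz.1 hz.2)) (not_lt.1 (hnot z hz.1 y hy.1 hy.2))
  rw [← Finset.card_filter_add_card_filter_not (s := C) (· < x)]
  exact add_le_add (Finset.card_le_card hleft) hright

theorem closable_subset_filter_lt {b : ℕ} : closable A b K ⊆ A.filter (· < b) := fun _ hx =>
  have hx := mem_closable.1 hx
  Finset.mem_filter.2 ⟨hx.1, hx.2.1⟩

theorem fillCount_p132_le (h : IsState b₀ b A K) (hK : ∀ {y z}, K y z → z < y)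
    (hr : (closable A b₀ K).card ≤ r) :
    fillCount p132 b A K ≤ rankCount (increments b₀ b) (A.filter (· < b₀)).card r := by
  induction m generalizing b₀ A K r with
  | zero =>
    rw [Finset.card_eq_zero.1 h.card, fillCount_zero]
    rfl
  | succ m ih =>
    rw [fillCount_succ, increments, rankCount, ← h.card_filter_lt]
    refine le_trans ?_ (Finset.sum_le_sum_of_subset (Finset.range_mono
      (h.card_closable.trans_le (Nat.add_le_add_right hr _))))
    rw [← sum_card_filter_lt (closable A (b 0) K)]
    refine Finset.sum_le_sum fun x hx => ?_
    obtain ⟨hxA, hxb, -⟩ := mem_closable.1 hx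
    rw [← card_filter_lt_erase hxA hxb]
    refine ih (h.step hxA hxb) ?_ (le_min (card_closable_forbidAfter_p132_le hK)
      (Finset.card_le_card closable_subset_filter_lt))
    rintro y z (hyz | ⟨-, -, hform⟩)
    exacts [hK hyz, (forms_p132.1 hform).2]

theorem filter_gt_closable_subset {b : ℕ} : (closable A b K).filter (x < ·) ⊆
    closable (A.erase x) b (forbidAfter p321 K b x) := fun y hy => by
  obtain ⟨hyK, hxy⟩ := Finset.mem_filter.1 hy
  obtain ⟨hyA, hyb, hyz⟩ := mem_closable.1 hyK
  refine mem_closable.2 ⟨Finset.mem_erase.2 ⟨hxy.ne', hyA⟩, hyb, ?_⟩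
  rintro z hz hzy (hKz | ⟨-, -, hform⟩)
  exacts [hyz z (Finset.mem_of_mem_erase hz) hzy hKz, hxy.not_gt (forms_p321.1 hform).2]

/- The leftmost remaining column is always closable. If it was one of the closable columns to the
right of `x`, then no remaining column is blocked any more. -/
theorem le_card_closable_forbidAfter_p321 {b : ℕ} (hK : ∀ y ∈ A, ∀ z ∈ A, (K y z ↔ z < y ∧ y < q))
    (hxA : x ∈ A) :
    min (((closable A b K).filter (x < ·)).card + 1) ((A.erase x).filter (· < b)).card ≤
      (closable (A.erase x) b (forbidAfter p321 K b x)).card := by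
  set C := closable (A.erase x) b (forbidAfter p321 K b x)
  set D := (closable A b K).filter (x < ·)
  set E := (A.erase x).filter (· < b)
  have hC : ∀ y ∈ E, (∀ z ∈ A.erase x, z < b → z < y → q ≤ y ∧ x < y) → y ∈ C := by
    intro y hyE hy
    obtain ⟨hyA, hyb⟩ := Finset.mem_filter.1 hyE
    refine mem_closable.2 ⟨hyA, hyb, ?_⟩
    rintro z hz - (hKz | ⟨-, hzb, hform⟩)
    · obtain ⟨hzy, hyq⟩ := (hK y (Finset.mem_of_mem_erase hyA) z (Finset.mem_of_mem_erase hz)).1 hKz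
      exact hyq.not_ge (hy z hz (hzy.trans hyb) hzy).1
    · obtain ⟨hzy, hyx⟩ := forms_p321.1 hform
      exact hyx.not_gt (hy z hz hzb hzy).2
  rcases E.eq_empty_or_nonempty with hE | hE
  · simp [hE]
  obtain ⟨y₀, hy₀E, hmin⟩ := E.exists_min_image id hE
  have hy₀C : y₀ ∈ C := hC y₀ hy₀E fun z hz hzb hzy =>
    absurd (hmin z (Finset.mem_filter.2 ⟨hz, hzb⟩)) hzy.not_ge
  by_cases hy₀D : y₀ ∈ D
  · obtain ⟨hy₀, hxy₀⟩ := Finset.mem_filter.1 hy₀D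
    obtain ⟨hy₀A, -, hnot⟩ := mem_closable.1 hy₀
    have hqy₀ : q ≤ y₀ := not_lt.1 fun h => hnot x hxA hxy₀.ne ((hK y₀ hy₀A x hxA).2 ⟨hxy₀, h⟩)
    have hEC : E ⊆ C := fun y hy => hC y hy fun _ _ _ _ =>
      ⟨hqy₀.trans (hmin y hy), hxy₀.trans_le (hmin y hy)⟩
    exact (min_le_right _ _).trans (Finset.card_le_card hEC)
  · refine (min_le_left _ _).trans ?_
    rw [← Finset.card_insert_of_notMem hy₀D]
    exact Finset.card_le_card (Finset.insert_subset hy₀C filter_gt_closable_subset)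

theorem rankCount_le_fillCount_p321 (h : IsState b₀ b A K)
    (hK : ∀ y ∈ A, ∀ z ∈ A, (K y z ↔ z < y ∧ y < q)) (hr : r ≤ (closable A b₀ K).card) :
    rankCount (increments b₀ b) (A.filter (· < b₀)).card r ≤ fillCount p321 b A K := by
  induction m generalizing b₀ A K q r with
  | zero =>
    rw [Finset.card_eq_zero.1 h.card, fillCount_zero]
    rfl
  | succ m ih =>
    rw [fillCount_succ, increments, rankCount, ← h.card_filter_lt]
    refine (Finset.sum_le_sum_of_subset (Finset.range_mono
      ((Nat.add_le_add_right hr _).trans_eq h.card_closable.symm))).trans ?_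
    rw [← sum_card_filter_gt (closable A (b 0) K)]
    refine Finset.sum_le_sum fun x hx => ?_
    obtain ⟨hxA, hxb, -⟩ := mem_closable.1 hx
    rw [← card_filter_lt_erase hxA hxb]
    refine ih (q := max q x) (h.step hxA hxb) (fun y hy z hz => ?_)
      (le_card_closable_forbidAfter_p321 hK hxA)
    rw [forbidAfter, forms_p321, hK y (Finset.mem_of_mem_erase hy) z (Finset.mem_of_mem_erase hz)]
    omega

end RowByRow

section Blocks

variable {m : ℕ} {b₀ b₁ x : ℕ} {A : Finset ℕ} {K : ℕ → ℕ → Prop} {B : List ℕ}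
  {L pre post : List (List ℕ)}

/-- The unused columns `< b₀` are divided from left to right into the blocks `L`, and a pair of
columns is forbidden exactly when it is an increasing pair within one block. -/
structure IsBlockState (b₀ : ℕ) (A : Finset ℕ) (K : ℕ → ℕ → Prop) (L : List (List ℕ)) : Prop where
  mem : ∀ x, x ∈ L.flatten ↔ x ∈ A ∧ x < b₀
  sorted : L.flatten.Pairwise (· < ·)
  rel : ∀ y ∈ A, ∀ z ∈ A, (K y z ↔ y < z ∧ ∃ B ∈ L, y ∈ B ∧ z ∈ B)

theorem IsBlockState.append_singletons (h : IsBlockState b₀ A K L) (hb : b₀ ≤ b₁)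
    (hA : Finset.Ico b₀ b₁ ⊆ A) :
    IsBlockState b₁ A K (L ++ (List.range' b₀ (b₁ - b₀)).map ([·])) := by
  have hflat : ((List.range' b₀ (b₁ - b₀)).map ([·])).flatten = List.range' b₀ (b₁ - b₀) := by
    rw [← List.flatMap_def, List.flatMap_singleton']
  refine ⟨fun x => ?_, ?_, fun y hy z hz => ?_⟩
  · have := @hA x
    simp only [List.flatten_append, hflat, List.mem_append, h.mem, List.mem_range'_1,
      Finset.mem_Ico] at this ⊢
    grind
  · rw [List.flatten_append, hflat, List.pairwise_append]
    refine ⟨h.sorted, List.pairwise_lt_range', fun x hx y hy => ?_⟩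
    exact ((h.mem x).1 hx).2.trans_le (List.mem_range'_1.1 hy).1
  · rw [h.rel y hy z hz]
    refine and_congr_right fun hyz => ⟨?_, ?_⟩
    · rintro ⟨B, hB, hyzB⟩
      exact ⟨B, List.mem_append_left _ hB, hyzB⟩
    · rintro ⟨B, hB, hyB, hzB⟩
      rcases List.mem_append.1 hB with hB | hB
      · exact ⟨B, hB, hyB, hzB⟩
      · obtain ⟨c, -, rfl⟩ := List.mem_map.1 hB
        rw [List.mem_singleton.1 hyB, List.mem_singleton.1 hzB] at hyz
        exact absurd hyz (lt_irrefl c)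

/- Using the last column `x` of a block forbids all increasing pairs to its right, so all later
blocks merge. -/
theorem IsBlockState.close (h : IsBlockState b₀ A K (pre ++ (B ++ [x]) :: post)) :
    IsBlockState b₀ (A.erase x) (forbidAfter p123 K b₀ x) (pre ++ [B, post.flatten]) := by
  have hmem := h.mem
  have hsorted := h.sorted
  simp only [List.flatten_append, List.flatten_cons, List.mem_append,
    List.append_assoc, List.singleton_append] at hmem hsorted
  have hflat : (pre ++ [B, post.flatten]).flatten = pre.flatten ++ (B ++ post.flatten) := by simp
  have hx : ∀ y, (y ∈ pre.flatten ∨ y ∈ B → y < x) ∧ (y ∈ post.flatten → x < y) := by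
    simp only [List.pairwise_append, List.pairwise_cons, List.mem_append, List.mem_cons] at hsorted
    grind
  refine ⟨fun y => ?_, ?_, fun y hy z hz => ?_⟩
  · rw [hflat, Finset.mem_erase]
    simp only [List.mem_append]
    grind
  · rw [hflat]
    exact hsorted.sublist (((List.sublist_cons_self x _).append_left B).append_left _)
  · rw [Finset.mem_erase] at hy hz
    have hpost : ∀ y ∈ A, y ≠ x → (y ∈ post.flatten ↔ y < b₀ ∧ x < y) := by
      simp only [List.mem_cons] at hmem
      grind
    have hsame : (∃ C ∈ post, y ∈ C ∧ z ∈ C) → y ∈ post.flatten ∧ z ∈ post.flatten :=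
      fun ⟨C, hC, hyC, hzC⟩ => ⟨List.mem_flatten_of_mem hC hyC, List.mem_flatten_of_mem hC hzC⟩
    rw [hpost y hy.2 hy.1, hpost z hz.2 hz.1] at hsame
    rw [forbidAfter, forms_p123, h.rel y hy.2 z hz.2]
    simp only [List.mem_append, List.mem_cons, List.not_mem_nil, or_false, or_and_right, exists_or,
      exists_eq_left, hy.1, hz.1, hpost y hy.2 hy.1, hpost z hz.2 hz.1]
    constructor
    · rintro (⟨hyz, hC | hC | hC⟩ | ⟨hyb, hzb, hxy, hyz⟩)
      exacts [⟨hyz, .inl hC⟩, ⟨hyz, .inr (.inl hC)⟩, ⟨hyz, .inr (.inr (hsame hC))⟩,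
        ⟨hyz, .inr (.inr ⟨⟨hyb, hxy⟩, hzb, hxy.trans hyz⟩)⟩]
    · rintro ⟨hyz, hC | hC | ⟨⟨hyb, hxy⟩, hzb, -⟩⟩
      exacts [.inl ⟨hyz, .inl hC⟩, .inl ⟨hyz, .inr (.inl hC)⟩, .inr ⟨hyb, hzb, hxy, hyz⟩]

theorem mem_filterMap_getLast? : x ∈ L.filterMap List.getLast? ↔
    ∃ pre B post, L = pre ++ (B ++ [x]) :: post := by
  rw [List.mem_filterMap]
  constructor
  · rintro ⟨C, hC, hx⟩
    obtain ⟨pre, post, rfl⟩ := List.append_of_mem hC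
    obtain ⟨B, rfl⟩ := List.getLast?_eq_some_iff.1 hx
    exact ⟨pre, B, post, rfl⟩
  · rintro ⟨pre, B, post, rfl⟩
    exact ⟨B ++ [x], by simp, by simp⟩

/- Within a block the columns have to be used from right to left. -/
theorem IsBlockState.closable_eq (h : IsBlockState b₀ A K L) :
    closable A b₀ K = (L.filterMap List.getLast?).toFinset := by
  ext x
  rw [mem_closable, List.mem_toFinset, mem_filterMap_getLast?]
  constructor
  · rintro ⟨hxA, hxb, hx⟩
    obtain ⟨C, hC, hxC⟩ := List.mem_flatten.1 ((h.mem x).2 ⟨hxA, hxb⟩)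
    obtain ⟨B, D, rfl⟩ := List.append_of_mem hxC
    obtain ⟨pre, post, rfl⟩ := List.append_of_mem hC
    rcases D with _ | ⟨z, D⟩
    · exact ⟨pre, B, post, rfl⟩
    · have hxz : x < z := by
        have := h.sorted
        simp only [List.flatten_append, List.flatten_cons, List.pairwise_append,
          List.pairwise_cons] at this
        exact this.2.1.1.2.1.1 z (by simp)
      have hzA : z ∈ A := ((h.mem z).1 (List.mem_flatten_of_mem hC (by simp))).1
      exact absurd ((h.rel x hxA z hzA).2 ⟨hxz, _, hC, by simp, by simp⟩) (hx z hzA hxz.ne')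
  · rintro ⟨pre, B, post, rfl⟩
    obtain ⟨hxA, hxb⟩ := (h.mem x).1 (by simp)
    refine ⟨hxA, hxb, fun z hz hzx hK => ?_⟩
    obtain ⟨hlt, C, hC, hxC, hzC⟩ := (h.rel x hxA z hz).1 hK
    have hsorted := h.sorted
    simp only [List.flatten_append, List.flatten_cons, List.pairwise_append, List.mem_append,
      List.mem_singleton] at hsorted
    obtain ⟨-, ⟨⟨-, -, hB⟩, -, hpost⟩, hpre⟩ := hsorted
    rcases List.mem_append.1 hC with hC | hC
    · exact (hpre x (List.mem_flatten_of_mem hC hxC) x (by simp)).false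
    rcases List.mem_cons.1 hC with rfl | hC
    · rcases List.mem_append.1 hzC with hzB | hzB
      · exact (hB z hzB x rfl).not_gt hlt
      · exact hzx (List.mem_singleton.1 hzB)
    · exact (hpost x (by simp) x (List.mem_flatten_of_mem hC hxC)).false

theorem filterMap_getLast?_sublist_flatten :
    (L.filterMap List.getLast?).Sublist L.flatten := by
  induction L with
  | nil => exact List.Sublist.slnil
  | cons C L ih =>
    rcases List.eq_nil_or_concat C with rfl | ⟨B, x, rfl⟩
    · simpa [List.filterMap_cons] using ih
    · simpa [List.filterMap_cons] using
        (ih.cons_cons x).trans (List.sublist_append_right B _)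

theorem sum_filterMap_getLast? {g : ℕ → ℕ} {f : List ℕ → ℕ}
    (h : ∀ pre B x post, L = pre ++ (B ++ [x]) :: post →
      g x = f (pre.map List.length ++ [B.length, post.flatten.length])) :
    ((L.filterMap List.getLast?).map g).sum = closeSum f (L.map List.length) := by
  induction L generalizing f with
  | nil => rfl
  | cons C L ih =>
    rw [List.map_cons, closeSum, ← ih fun pre B x post hL =>
      h (C :: pre) B x post (congrArg (C :: ·) hL)]
    rcases List.eq_nil_or_concat C with rfl | ⟨B, x, rfl⟩
    · simp [List.filterMap_cons]
    · simp [h [] B x L (by simp), List.length_flatten]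

theorem fillCount_p123 {b : Fin m → ℕ} (h : IsState b₀ b A K) (hL : IsBlockState b₀ A K L) :
    fillCount p123 b A K = blockCount (increments b₀ b) (L.map List.length) := by
  induction m generalizing b₀ A K L with
  | zero =>
    rw [Finset.card_eq_zero.1 h.card, fillCount_zero]
    rfl
  | succ m ih =>
    have hL' := hL.append_singletons (h.le 0) (h.subset 0)
    set L' := L ++ (List.range' b₀ (b 0 - b₀)).map ([·])
    have hlength : L.map List.length ++ List.replicate (b 0 - b₀) 1 = L'.map List.length := by
      simp [L', Function.comp_def]
    rw [increments, blockCount, hlength, fillCount_succ, hL'.closable_eq, List.sum_toFinset]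
    · refine sum_filterMap_getLast? fun pre B x post hsplit => ?_
      have hx := mem_closable.1 (hL'.closable_eq ▸ List.mem_toFinset.2
        (mem_filterMap_getLast?.2 ⟨pre, B, post, hsplit⟩))
      rw [hsplit] at hL'
      simpa using ih (h.step hx.1 hx.2.1) hL'.close
    · exact (hL'.sorted.imp fun hlt => hlt.ne).sublist filterMap_getLast?_sublist_flatten

variable {n : ℕ} {b : Fin n → ℕ}

theorem SYcard_p123_eq (hb : IsYoungDiagram b) :
    SYcard b p123 = rankCount (increments 0 b) 0 0 := by
  rw [SYcard_eq_fillCount hb, fillCount_p123 (isState_zero hb) (L := []), List.map_nil,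
    blockCount_nil]
  exact ⟨by simp, List.Pairwise.nil, by simp⟩

theorem SYcard_p132_le_p123 (hb : IsYoungDiagram b) : SYcard b p132 ≤ SYcard b p123 := by
  rw [SYcard_p123_eq hb, SYcard_eq_fillCount hb]
  simpa using fillCount_p132_le (r := 0) (isState_zero hb) False.elim (by simp [closable])

theorem SYcard_p123_le_p321 (hb : IsYoungDiagram b) : SYcard b p123 ≤ SYcard b p321 := by
  rw [SYcard_p123_eq hb, SYcard_eq_fillCount hb]
  simpa using rankCount_le_fillCount_p321 (q := 0) (isState_zero hb) (by simp) (Nat.zero_le _)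

theorem SYcard_p123_le_p312 (hb : IsYoungDiagram b) : SYcard b p123 ≤ SYcard b p312 :=
  (SYcard_p123_le_p321 hb).trans (SYcard_p321_le_p312 hb.mono)

end Blocks

section Reflection

variable {n k : ℕ} {b b' : Fin n → ℕ} {π : Perm (Fin n)} {σ : Perm (Fin k)}

/-- The reflection of a permutation in the antidiagonal, which moves the dot in column `i` and row
`h` to column `h.rev` and row `i.rev`. -/
def antidiag (π : Perm (Fin n)) : Perm (Fin n) :=
  (Fin.revPerm.trans π.symm).trans Fin.revPerm

theorem antidiag_apply (π : Perm (Fin n)) (i : Fin n) : antidiag π i = (π.symm i.rev).rev := rfl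

theorem antidiag_involutive : Function.Involutive (antidiag (n := n)) := fun π =>
  Equiv.ext fun i => by simp [antidiag]

theorem antidiag_p123 : antidiag p123 = p123 := by decide

theorem antidiag_p213 : antidiag p213 = p132 := by decide

theorem isTransversal_antidiag
    (hb : ∀ i h : Fin n, (i : ℕ) + 1 ≤ b h ↔ (h.rev : ℕ) + 1 ≤ b' i.rev)
    (hπ : IsTransversal b π) : IsTransversal b' (antidiag π) := fun i => by
  simpa [antidiag_apply] using (hb _ _).1 (hπ (π.symm i.rev))

theorem containsIn_antidiag
    (hb : ∀ i h : Fin n, (i : ℕ) + 1 ≤ b h ↔ (h.rev : ℕ) + 1 ≤ b' i.rev)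
    (h : ContainsIn b π σ) : ContainsIn b' (antidiag π) (antidiag σ) := by
  obtain ⟨f, hf, hord, hcell⟩ := h
  have hrow := forall_lt_iff_lt_iff_strictMono (g := π ∘ f).1 hord
  refine ⟨fun s => (π (f (σ.symm s.rev))).rev, fun s t hst => ?_, fun s t => ?_, fun s t => ?_⟩
  · exact Fin.rev_lt_rev.2 (hrow (Fin.rev_lt_rev.2 hst))
  · simp only [antidiag_apply, Fin.rev_rev, Equiv.symm_apply_apply, Fin.rev_lt_rev, hf.lt_iff_lt]
  · simpa only [antidiag_apply, Fin.rev_rev, Equiv.symm_apply_apply] using (hb _ _).1 (hcell _ _)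

theorem SYcard_antidiag (hb : ∀ i h : Fin n, (i : ℕ) + 1 ≤ b h ↔ (h.rev : ℕ) + 1 ≤ b' i.rev) :
    SYcard b' (antidiag σ) = SYcard b σ := by
  have hb' : ∀ i h : Fin n, (i : ℕ) + 1 ≤ b' h ↔ (h.rev : ℕ) + 1 ≤ b i.rev := fun i h => by
    rw [hb, Fin.rev_rev, Fin.rev_rev]
  refine (Nat.card_congr (antidiag_involutive.toPerm.subtypeEquiv fun π => and_congr
    ⟨isTransversal_antidiag hb, fun h => ?_⟩
    (not_congr ⟨containsIn_antidiag hb, fun h => ?_⟩))).symm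
  · simpa [antidiag_involutive π] using isTransversal_antidiag hb' h
  · simpa [antidiag_involutive π, antidiag_involutive σ] using containsIn_antidiag hb' h

theorem SYcard_p213_le_p123 (hb : IsYoungDiagram b) : SYcard b p213 ≤ SYcard b p123 := by
  obtain ⟨b', hb', hcell⟩ := exists_isYoungDiagram (fun i h => (h.rev : ℕ) + 1 ≤ b i.rev)
    fun hi hh hY => (Nat.add_le_add_right (Fin.rev_le_rev.2 hh) 1).trans
      (hY.trans (hb.mono (Fin.rev_le_rev.2 hi)))
  have hflip : ∀ i h : Fin n, (i : ℕ) + 1 ≤ b h ↔ (h.rev : ℕ) + 1 ≤ b' i.rev := fun i h => by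
    rw [hcell, Fin.rev_rev, Fin.rev_rev]
  rw [← SYcard_antidiag hflip, ← SYcard_antidiag hflip, antidiag_p213, antidiag_p123]
  exact SYcard_p132_le_p123 hb'

end Reflection

section InnerDots

variable {n k m : ℕ} {τ : Perm (Fin k)} {π π₀ : Perm (Fin n)} {i i' h h' : Fin n}

/-- The dots in the columns `f 0, f 1, …` form an occurrence of the pattern `τ` in `π`. -/
def IsOccurrence (τ : Perm (Fin k)) (π : Perm (Fin n)) (f : Fin k → Fin n) : Prop :=
  StrictMono f ∧ ∀ s t, τ s < τ t ↔ π (f s) < π (f t)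

/-- The cell in column `i` and row `h` has an occurrence of `τ` strictly to its right and strictly
below it. -/
def InRegion (τ : Perm (Fin k)) (π : Perm (Fin n)) (i h : Fin n) : Prop :=
  ∃ f, IsOccurrence τ π f ∧ ∀ s, i < f s ∧ π (f s) < h

/-- The dot of `π` in column `i` is inner: it can play a role in the first block of an occurrence of
`(σ|τ)`. -/
def IsInner (τ : Perm (Fin k)) (π : Perm (Fin n)) (i : Fin n) : Prop :=
  InRegion τ π i (π i)

theorem IsOccurrence.congr {f : Fin k → Fin n} (hf : IsOccurrence τ π f)
    (h : ∀ s, π₀ (f s) = π (f s)) : IsOccurrence τ π₀ f :=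
  ⟨hf.1, by simpa only [h] using hf.2⟩

theorem InRegion.mono (H : InRegion τ π i h) (hi : i' ≤ i) (hh : h ≤ h') : InRegion τ π i' h' :=
  let ⟨f, hf, hr⟩ := H
  ⟨f, hf, fun s => ⟨hi.trans_lt (hr s).1, (hr s).2.trans_le hh⟩⟩

/- An occurrence whose first column is as far right as possible has no inner dot, since an
occurrence to the lower right of one of its dots would start further right. -/
theorem InRegion.exists_not_isInner [NeZero k] (H : InRegion τ π i h) :
    ∃ f, IsOccurrence τ π f ∧ (∀ s, i < f s ∧ π (f s) < h) ∧ ∀ s, ¬ IsInner τ π (f s) := by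
  have : Nonempty {f // IsOccurrence τ π f ∧ ∀ s, i < f s ∧ π (f s) < h} := nonempty_subtype.2 H
  obtain ⟨⟨f, hf, hr⟩, hmax⟩ := Finite.exists_max
    fun f : {f // IsOccurrence τ π f ∧ ∀ s, i < f s ∧ π (f s) < h} => f.1 0
  refine ⟨f, hf, hr, fun s ⟨g, hg, hgr⟩ => ?_⟩
  have hgf : g 0 ≤ f 0 :=
    hmax ⟨g, hg, fun u => ⟨(hr s).1.trans (hgr u).1, (hgr u).2.trans (hr s).2⟩⟩
  exact ((hf.1.monotone (Fin.zero_le s)).trans_lt (hgr 0).1).not_ge hgf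

theorem castAdd_lt_natAdd (s : Fin m) (u : Fin k) : Fin.castAdd k s < Fin.natAdd m u :=
  Fin.lt_def.2 (s.2.trans_le (Nat.le_add_right m u))

theorem strictMono_append_iff {α : Type*} [Preorder α] {f : Fin m → α} {g : Fin k → α} :
    StrictMono (Fin.append f g) ↔ StrictMono f ∧ StrictMono g ∧ ∀ s u, f s < g u := by
  have hlt (u : Fin k) (s : Fin m) : ¬ Fin.natAdd m u < Fin.castAdd k s :=
    (castAdd_lt_natAdd s u).not_gt
  simp only [StrictMono, Fin.forall_fin_add, Fin.append_left, Fin.append_right,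
    (Fin.strictMono_castAdd k).lt_iff_lt, Fin.natAdd_lt_natAdd_iff, castAdd_lt_natAdd, hlt,
    forall_true_left, IsEmpty.forall_iff, forall_and, implies_true]
  tauto

theorem val_blockSum_castAdd (σ : Perm (Fin m)) (τ : Perm (Fin k)) (s : Fin m) :
    (blockSum σ τ (Fin.castAdd k s) : ℕ) = k + σ s := by
  simp [blockSum, Nat.add_comm]

theorem val_blockSum_natAdd (σ : Perm (Fin m)) (τ : Perm (Fin k)) (u : Fin k) :
    (blockSum σ τ (Fin.natAdd m u) : ℕ) = τ u := by
  simp [blockSum]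

theorem isOccurrence_blockSum_append_iff {σ : Perm (Fin m)} {f : Fin m → Fin n}
    {g : Fin k → Fin n} :
    IsOccurrence (blockSum σ τ) π (Fin.append f g) ↔ IsOccurrence σ π f ∧ IsOccurrence τ π g ∧
      ∀ s u, f s < g u ∧ π (g u) < π (f s) := by
  have hleft (s t : Fin m) :
      blockSum σ τ (Fin.castAdd k s) < blockSum σ τ (Fin.castAdd k t) ↔ σ s < σ t := by
    simp only [Fin.lt_def, val_blockSum_castAdd, add_lt_add_iff_left]
  have hright (u v : Fin k) :
      blockSum σ τ (Fin.natAdd m u) < blockSum σ τ (Fin.natAdd m v) ↔ τ u < τ v := by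
    simp only [Fin.lt_def, val_blockSum_natAdd]
  have hcross (u : Fin k) (s : Fin m) :
      blockSum σ τ (Fin.natAdd m u) < blockSum σ τ (Fin.castAdd k s) := by
    rw [Fin.lt_def, val_blockSum_castAdd, val_blockSum_natAdd]
    omega
  simp only [IsOccurrence, strictMono_append_iff, Fin.forall_fin_add, Fin.append_left,
    Fin.append_right, hleft, hright, hcross, (hcross _ _).not_gt, true_iff, false_iff, forall_and]
  constructor
  · rintro ⟨⟨hf, hg, hcol⟩, ⟨hσ, hrow⟩, -, hτ⟩
    exact ⟨⟨hf, hσ⟩, ⟨hg, hτ⟩, hcol, fun s u => hrow u s⟩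
  · rintro ⟨⟨hf, hσ⟩, ⟨hg, hτ⟩, hcol, hrow⟩
    exact ⟨⟨hf, hg, hcol⟩, ⟨hσ, fun u s => hrow s u⟩, fun s u => (hrow s u).not_gt, hτ⟩

/- The occurrence of `τ` below and to the right of the last column and the lowest row of an
occurrence of `σ` completes it to an occurrence of `(σ|τ)`. -/
theorem containsPat_blockSum_iff {σ : Perm (Fin (m + 1))} :
    ContainsPat π (blockSum σ τ) ↔
      ∃ f, IsOccurrence σ π f ∧ ∀ s t, InRegion τ π (f s) (π (f t)) := by
  constructor
  · rintro ⟨F, hF⟩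
    obtain ⟨hf, hg, hfg⟩ := isOccurrence_blockSum_append_iff.1
      ((Fin.append_castAdd_natAdd (f := F)).symm ▸ hF : IsOccurrence (blockSum σ τ) π _)
    exact ⟨_, hf, fun s t => ⟨_, hg, fun u => ⟨(hfg s u).1, (hfg t u).2⟩⟩⟩
  · rintro ⟨f, hf, hreg⟩
    obtain ⟨g, hg, hr⟩ := hreg (Fin.last m) (σ.symm 0)
    have hlow : ∀ s, π (f (σ.symm 0)) ≤ π (f s) := fun s => by
      simpa using (forall_lt_iff_lt_iff_strictMono (g := π ∘ f).1 hf.2).monotone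
        (Fin.zero_le (σ s))
    exact ⟨_, isOccurrence_blockSum_append_iff.2 ⟨hf, hg, fun s u =>
      ⟨(hf.1.monotone (Fin.le_last s)).trans_lt (hr u).1, (hr u).2.trans_le (hlow s)⟩⟩⟩

/-- `π` arises from `π₀` by moving only the inner dots, within the region of `π₀`. -/
structure InnerMove (τ : Perm (Fin k)) (π₀ π : Perm (Fin n)) : Prop where
  inRegion : ∀ {i}, IsInner τ π₀ i → InRegion τ π₀ i (π i)
  apply_eq : ∀ {i}, ¬ IsInner τ π₀ i → π i = π₀ i

/- The region is determined by the dots that are not inner, and these do not move. -/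
theorem InnerMove.inRegion_iff [NeZero k] (H : InnerMove τ π₀ π) :
    InRegion τ π i h ↔ InRegion τ π₀ i h := by
  constructor
  · rintro ⟨f, hf, hr⟩
    by_cases hin : ∃ s, IsInner τ π₀ (f s)
    · obtain ⟨s, hs⟩ := hin
      exact (H.inRegion hs).mono (hr s).1.le (hr s).2.le
    · have heq (s) : π (f s) = π₀ (f s) := H.apply_eq (not_exists.1 hin s)
      exact ⟨f, hf.congr fun s => (heq s).symm, fun s => heq s ▸ hr s⟩
  · intro hreg
    obtain ⟨f, hf, hr, hout⟩ := hreg.exists_not_isInner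
    have heq (s) : π (f s) = π₀ (f s) := H.apply_eq (hout s)
    exact ⟨f, hf.congr heq, fun s => (heq s).symm ▸ hr s⟩

theorem InnerMove.inRegion_apply_iff (H : InnerMove τ π₀ π) :
    InRegion τ π₀ i (π i) ↔ IsInner τ π₀ i := by
  refine ⟨fun hreg => by_contra fun hout => ?_, H.inRegion⟩
  rw [H.apply_eq hout] at hreg
  exact hout hreg

theorem InnerMove.isInner_iff [NeZero k] (H : InnerMove τ π₀ π) :
    IsInner τ π i ↔ IsInner τ π₀ i :=
  H.inRegion_iff.trans H.inRegion_apply_iff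

theorem innerMove_equivalence [NeZero k] : Equivalence (InnerMove (n := n) τ) where
  refl _ := ⟨id, fun _ => rfl⟩
  symm H := ⟨fun hi => H.inRegion_iff.2 (H.isInner_iff.1 hi),
    fun hi => (H.apply_eq (mt H.isInner_iff.2 hi)).symm⟩
  trans H H' := ⟨fun hi => H.inRegion_iff.1 (H'.inRegion (H.isInner_iff.2 hi)),
    fun hi => (H'.apply_eq (mt H.isInner_iff.1 hi)).trans (H.apply_eq hi)⟩

end InnerDots

section ClassDiagrams

variable {n k m t : ℕ} {τ : Perm (Fin k)} {σ : Perm (Fin (m + 1))} {π₀ π : Perm (Fin n)}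
  {c r : Fin t → Fin n} {b : Fin t → ℕ} {ρ : Perm (Fin t)}

/-- `c` and `r` list the columns and the rows of the inner dots of `π₀` in increasing order, and
`b` gives the row lengths of the diagram formed by the region of `π₀` in these columns and rows. -/
structure IsClassDiagram (τ : Perm (Fin k)) (π₀ : Perm (Fin n)) (c r : Fin t → Fin n)
    (b : Fin t → ℕ) : Prop where
  strictMono_col : StrictMono c
  strictMono_row : StrictMono r
  isInner_iff_col : ∀ i, IsInner τ π₀ i ↔ i ∈ Set.range c
  isInner_iff_row : ∀ i, IsInner τ π₀ i ↔ π₀ i ∈ Set.range r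
  le_iff : ∀ j s : Fin t, (j : ℕ) + 1 ≤ b s ↔ InRegion τ π₀ (c j) (r s)

theorem exists_isClassDiagram (τ : Perm (Fin k)) (π₀ : Perm (Fin n)) :
    ∃ (t : ℕ) (c r : Fin t → Fin n) (b : Fin t → ℕ),
      IsYoungDiagram b ∧ IsClassDiagram τ π₀ c r b := by
  classical
  let I := Finset.univ.filter (IsInner τ π₀)
  have hcard : (I.image π₀).card = I.card := Finset.card_image_of_injective _ π₀.injective
  let c := I.orderEmbOfFin rfl
  let r := (I.image π₀).orderEmbOfFin hcard
  obtain ⟨b, hb, hcell⟩ := exists_isYoungDiagram (fun j s => InRegion τ π₀ (c j) (r s))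
    fun hj hs hreg => hreg.mono (c.monotone hj) (r.monotone hs)
  refine ⟨I.card, c, r, b, hb, c.strictMono, r.strictMono, fun i => ?_, fun i => ?_, hcell⟩
  · simp [c, I]
  · simp [r, I]

namespace IsClassDiagram

theorem exists_transversal (hD : IsClassDiagram τ π₀ c r b) (H : InnerMove τ π₀ π) :
    ∃ ρ, IsTransversal b ρ ∧ ∀ j, π (c j) = r (ρ j) := by
  have hcol (j) : IsInner τ π₀ (c j) := (hD.isInner_iff_col _).2 ⟨j, rfl⟩
  have hrow (j) : ∃ s, r s = π (c j) := by
    suffices IsInner τ π₀ (π₀.symm (π (c j))) by simpa using (hD.isInner_iff_row _).1 this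
    by_contra hout
    have hfix := H.apply_eq hout
    rw [Equiv.apply_symm_apply, π.apply_eq_iff_eq] at hfix
    exact hout (hfix.symm ▸ hcol j)
  choose ρ hρ using hrow
  have hinj : Function.Injective ρ := fun j j' hj =>
    hD.strictMono_col.injective (π.injective (by rw [← hρ, ← hρ, hj]))
  refine ⟨Equiv.ofBijective ρ (Finite.injective_iff_bijective.1 hinj), fun j => ?_,
    fun j => (hρ j).symm⟩
  rw [hD.le_iff, Equiv.ofBijective_apply, hρ]
  exact H.inRegion (hcol j)

theorem exists_innerMove (hD : IsClassDiagram τ π₀ c r b) (hρ : IsTransversal b ρ) :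
    ∃ π, InnerMove τ π₀ π ∧ ∀ j, π (c j) = r (ρ j) := by
  classical
  let inner : {i // i ∈ Set.range c} ≃ {h // h ∈ Set.range r} :=
    (Equiv.ofInjective c hD.strictMono_col.injective).symm.trans
      (ρ.trans (Equiv.ofInjective r hD.strictMono_row.injective))
  let outer : {i // i ∉ Set.range c} ≃ {h // h ∉ Set.range r} :=
    π₀.subtypeEquiv fun i => not_congr ((hD.isInner_iff_col i).symm.trans (hD.isInner_iff_row i))
  have hπ (j) : Equiv.subtypeCongr inner outer (c j) = r (ρ j) := by
    simp [Equiv.subtypeCongr, inner]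
  refine ⟨Equiv.subtypeCongr inner outer, ⟨fun {i} hi => ?_, fun {i} hi => ?_⟩, hπ⟩
  · obtain ⟨j, rfl⟩ := (hD.isInner_iff_col i).1 hi
    rw [hπ, ← hD.le_iff]
    exact hρ j
  · rw [hD.isInner_iff_col] at hi
    simp [Equiv.subtypeCongr, Equiv.sumCompl_symm_apply_of_neg hi, outer]

theorem containsPat_iff [NeZero k] (hD : IsClassDiagram τ π₀ c r b) (H : InnerMove τ π₀ π)
    (hπ : ∀ j, π (c j) = r (ρ j)) :
    ContainsPat π (blockSum σ τ) ↔ ContainsIn b ρ σ := by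
  simp only [containsPat_blockSum_iff, H.inRegion_iff]
  constructor
  · rintro ⟨f, hf, hreg⟩
    choose g hg using fun s =>
      (hD.isInner_iff_col (f s)).1 (H.inRegion_apply_iff.1 (hreg s s))
    obtain rfl : c ∘ g = f := funext hg
    refine ⟨g, fun s u hsu => hD.strictMono_col.lt_iff_lt.1 (hf.1 hsu), fun s u => ?_,
      fun s u => ?_⟩
    · simpa only [Function.comp_apply, hπ, hD.strictMono_row.lt_iff_lt] using hf.2 s u
    · simpa only [hD.le_iff, Function.comp_apply, ← hπ] using hreg s u
  · rintro ⟨g, hg, hord, hcell⟩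
    refine ⟨c ∘ g, ⟨hD.strictMono_col.comp hg, fun s u => ?_⟩, fun s u => ?_⟩
    · simpa only [Function.comp_apply, hπ, hD.strictMono_row.lt_iff_lt] using hord s u
    · simpa only [hD.le_iff, Function.comp_apply, ← hπ] using hcell s u

theorem card_innerMove [NeZero k] (hD : IsClassDiagram τ π₀ c r b) (σ : Perm (Fin (m + 1))) :
    Nat.card {π // InnerMove τ π₀ π ∧ ¬ ContainsPat π (blockSum σ τ)} = SYcard b σ := by
  choose ρ hρ hπ using fun π : {π // InnerMove τ π₀ π ∧ ¬ ContainsPat π (blockSum σ τ)} =>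
    hD.exists_transversal π.2.1
  refine Nat.card_eq_of_bijective
    (fun π => ⟨ρ π, hρ π, mt (hD.containsPat_iff π.2.1 (hπ π)).2 π.2.2⟩) ⟨fun π π' h => ?_, ?_⟩
  · refine Subtype.ext (Equiv.ext fun i => ?_)
    by_cases hi : IsInner τ π₀ i
    · obtain ⟨j, rfl⟩ := (hD.isInner_iff_col i).1 hi
      rw [hπ, hπ, Subtype.mk.inj h]
    · rw [π.2.1.apply_eq hi, π'.2.1.apply_eq hi]
  · rintro ⟨ρ', hρ', hav⟩
    obtain ⟨π, H, hπ'⟩ := hD.exists_innerMove hρ'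
    let p : {π // InnerMove τ π₀ π ∧ ¬ ContainsPat π (blockSum σ τ)} :=
      ⟨π, H, mt (hD.containsPat_iff H hπ').1 hav⟩
    exact ⟨p, Subtype.ext (Equiv.ext fun j => hD.strictMono_row.injective
      ((hπ p j).symm.trans (hπ' j)))⟩

end IsClassDiagram

theorem card_subtype_eq_sum_quotient {α : Type*} [Finite α] (S : Setoid α) [Fintype (Quotient S)]
    (p : α → Prop) :
    Nat.card {a // p a} = ∑ q : Quotient S, Nat.card {a // S q.out a ∧ p a} := by
  rw [← Nat.card_sigma]
  refine Nat.card_congr ((Equiv.sigmaFiberEquiv fun a : {a // p a} =>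
    (⟦a.1⟧ : Quotient S)).symm.trans (Equiv.sigmaCongrRight fun q => ?_))
  exact (Equiv.subtypeSubtypeEquivSubtypeInter p fun a => (⟦a⟧ : Quotient S) = q).trans
    (Equiv.subtypeEquivRight fun a => by rw [and_comm, eq_comm, Quotient.eq_mk_iff_out])

theorem SnCard_blockSum_lt [NeZero k] {σ σ' : Perm (Fin (m + 1))}
    (hle : ∀ {t : ℕ} {b : Fin t → ℕ}, IsYoungDiagram b → SYcard b σ ≤ SYcard b σ')
    (hD : IsClassDiagram τ π₀ c r b) (hlt : SYcard b σ < SYcard b σ') :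
    SnCard n (blockSum σ τ) < SnCard n (blockSum σ' τ) := by
  classical
  let S : Setoid (Perm (Fin n)) := ⟨InnerMove τ, innerMove_equivalence⟩
  rw [SnCard, SnCard, card_subtype_eq_sum_quotient S, card_subtype_eq_sum_quotient S]
  refine Finset.sum_lt_sum (fun q _ => ?_) ⟨⟦π₀⟧, Finset.mem_univ _, ?_⟩
  · obtain ⟨t, c, r, b, hb, hD⟩ := exists_isClassDiagram τ q.out
    exact (hD.card_innerMove σ).trans_le ((hle hb).trans_eq (hD.card_innerMove σ').symm)
  · have hout : InnerMove τ (⟦π₀⟧ : Quotient S).out π₀ := Quotient.mk_out (s := S) π₀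
    have hclass : ∀ π, S (⟦π₀⟧ : Quotient S).out π ↔ InnerMove τ π₀ π := fun π =>
      ⟨innerMove_equivalence.trans (innerMove_equivalence.symm hout),
        innerMove_equivalence.trans hout⟩
    simpa only [hclass, hD.card_innerMove] using hlt

end ClassDiagrams

section Witness

variable {k n : ℕ} {τ : Perm (Fin k)} {π : Perm (Fin n)} {i h : Fin n}

/-- The square of side `5` without the cell in its last column and lowest row, given by its row
lengths. -/
def cornerDiagram : Fin 5 → ℕ := ![4, 5, 5, 5, 5]

theorem le_cornerDiagram_iff (j s : Fin 5) : (j : ℕ) + 1 ≤ cornerDiagram s ↔ ¬ (j = 4 ∧ s = 0) := by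
  decide +revert

theorem SYcard_cornerDiagram_eq (σ : Perm (Fin 3)) :
    SYcard cornerDiagram σ = Fintype.card {π : Perm (Fin 5) //
      (∀ i : Fin 5, (i : ℕ) + 1 ≤ cornerDiagram (π i)) ∧
      ¬ ∃ x y z : Fin 5, π x < π y ∧ π y < π z ∧ Forms σ x y z ∧
        (y : ℕ) + 1 ≤ cornerDiagram (π x) ∧ (z : ℕ) + 1 ≤ cornerDiagram (π x)} := by
  rw [SYcard, ← Nat.card_eq_fintype_card]
  refine Nat.card_congr (Equiv.subtypeEquivRight fun π => and_congr_right fun hπ => not_congr ?_)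
  exact containsIn_iff_exists_forms (by decide) hπ

set_option maxRecDepth 100000 in
theorem SYcard_cornerDiagram_p213_lt_p123 :
    SYcard cornerDiagram p213 < SYcard cornerDiagram p123 := by
  simp only [SYcard_cornerDiagram_eq]
  decide +kernel

set_option maxRecDepth 100000 in
theorem SYcard_cornerDiagram_p123_lt_p312 :
    SYcard cornerDiagram p123 < SYcard cornerDiagram p312 := by
  simp only [SYcard_cornerDiagram_eq]
  decide +kernel

theorem inRegion_of_copy {a v : ℕ} (han : a + k ≤ n) (hia : i < a) (hvh : v + k ≤ h)
    (hcopy : ∀ s : Fin k, (π ⟨a + s, by omega⟩ : ℕ) = v + τ s) : InRegion τ π i h := by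
  refine ⟨fun s => ⟨a + s, by omega⟩, ⟨fun s t hst => ?_, fun s t => ?_⟩, fun s => ⟨?_, ?_⟩⟩
  · exact Nat.add_lt_add_left hst a
  · simp only [Fin.lt_def, hcopy, add_lt_add_iff_left]
  · simp only [Fin.lt_def]
    omega
  · rw [Fin.lt_def, hcopy]
    omega

/- The last column of an occurrence of `τ` to the right of column `i` is at least `i + k`. -/
theorem not_inRegion_of_forall_le [NeZero k] (hlow : ∀ c : Fin n, i + k ≤ c → h ≤ π c) :
    ¬ InRegion τ π i h := by
  rintro ⟨f, ⟨hf, -⟩, hr⟩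
  have hcard : k ≤ f ⊤ - i := by
    simpa using Finset.card_le_card_of_injOn (s := Finset.univ) (t := Finset.Ioc i (f ⊤)) f
      (fun s _ => Finset.mem_coe.2 (Finset.mem_Ioc.2 ⟨(hr s).1, hf.monotone le_top⟩))
      hf.injective.injOn
  have hlt : (i : ℕ) < f ⊤ := (hr ⊤).1
  exact (hr ⊤).2.not_ge (hlow _ (by omega))

/-- `τ` as a permutation of `ℕ` which fixes all numbers from `k` on. -/
def natPerm (τ : Perm (Fin k)) : Perm ℕ := τ.extendDomain Fin.equivSubtype

theorem natPerm_val (τ : Perm (Fin k)) (s : Fin k) : natPerm τ s = τ s :=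
  τ.extendDomain_apply_image Fin.equivSubtype s

theorem natPerm_lt (τ : Perm (Fin k)) {a : ℕ} (ha : a < k) : natPerm τ a < k :=
  (natPerm_val τ ⟨a, ha⟩).trans_lt (τ _).2

/-- In one-line notation, starting from zero: `k, 2k+1, 2k+2, 2k+3`, a copy of `τ` on the
values `0, …, k-1`, then `2k+4`, a copy of `τ` on the values `k+1, …, 2k`, and fixed points.
The second copy lies below all inner dots but the first, so the only cell of the diagram that is
missing is the one in the column of `2k+4` and the row of `k`. -/
def witnessVal (τ : Perm (Fin k)) (c : ℕ) : ℕ :=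
  if c = 0 then k else if c ≤ 3 then 2 * k + c else if c < k + 4 then natPerm τ (c - 4)
  else if c = k + 4 then 2 * k + 4 else if c < 2 * k + 5 then k + 1 + natPerm τ (c - (k + 5))
  else c

theorem witnessVal_lt (τ : Perm (Fin k)) (hn : 2 * k + 5 ≤ n) (c : Fin n) :
    witnessVal τ c < n := by
  have hfst := natPerm_lt τ (a := c - 4)
  have hsnd := natPerm_lt τ (a := c - (k + 5))
  unfold witnessVal
  split_ifs <;> omega

theorem witnessVal_injective (τ : Perm (Fin k)) : Function.Injective (witnessVal τ) := by
  intro c d hcd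
  have hfst := (natPerm τ).injective.eq_iff (a := c - 4) (b := d - 4)
  have hsnd := (natPerm τ).injective.eq_iff (a := c - (k + 5)) (b := d - (k + 5))
  have hcfst := natPerm_lt τ (a := c - 4)
  have hcsnd := natPerm_lt τ (a := c - (k + 5))
  have hdfst := natPerm_lt τ (a := d - 4)
  have hdsnd := natPerm_lt τ (a := d - (k + 5))
  unfold witnessVal at hcd
  split_ifs at hcd <;> omega

/-- The permutation of `Fin n` with values `witnessVal`; its class diagram is `cornerDiagram`. -/
noncomputable def witness (τ : Perm (Fin k)) (hn : 2 * k + 5 ≤ n) : Perm (Fin n) :=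
  Equiv.ofBijective (fun c => ⟨witnessVal τ c, witnessVal_lt τ hn c⟩)
    (Finite.injective_iff_bijective.1 fun _ _ h =>
      Fin.ext (witnessVal_injective τ (congrArg Fin.val h)))

theorem val_witness (τ : Perm (Fin k)) (hn : 2 * k + 5 ≤ n) (c : Fin n) :
    (witness τ hn c : ℕ) = witnessVal τ c := rfl

theorem inRegion_witness_of_le_three (hn : 2 * k + 5 ≤ n) (hi : (i : ℕ) ≤ 3) (hh : k ≤ h) :
    InRegion τ (witness τ hn) i h := by
  refine inRegion_of_copy (a := 4) (v := 0) (by omega) (by omega) (by omega) fun s => ?_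
  simp [val_witness, witnessVal, natPerm_val, Nat.add_comm 4]

theorem inRegion_witness_of_le_add_four (hn : 2 * k + 5 ≤ n) (hi : (i : ℕ) ≤ k + 4)
    (hh : 2 * k + 1 ≤ h) : InRegion τ (witness τ hn) i h := by
  refine inRegion_of_copy (a := k + 5) (v := k + 1) (by omega) (by omega) (by omega) fun s => ?_
  change witnessVal τ (k + 5 + s) = k + 1 + τ s
  rw [witnessVal, if_neg (by omega), if_neg (by omega), if_neg (by omega),
    if_neg (by omega), if_pos (by omega), Nat.add_sub_cancel_left, natPerm_val]

/-- The columns of the inner dots of `witness`. -/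
def witnessCol (hn : 2 * k + 5 ≤ n) : Fin 5 → Fin n :=
  ![⟨0, by omega⟩, ⟨1, by omega⟩, ⟨2, by omega⟩, ⟨3, by omega⟩, ⟨k + 4, by omega⟩]

/-- The rows of the inner dots of `witness`. -/
def witnessRow (hn : 2 * k + 5 ≤ n) : Fin 5 → Fin n :=
  ![⟨k, by omega⟩, ⟨2 * k + 1, by omega⟩, ⟨2 * k + 2, by omega⟩, ⟨2 * k + 3, by omega⟩,
    ⟨2 * k + 4, by omega⟩]

theorem witness_comp_witnessCol (τ : Perm (Fin k)) (hn : 2 * k + 5 ≤ n) :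
    witness τ hn ∘ witnessCol hn = witnessRow hn := by
  refine funext fun j => Fin.ext ?_
  rw [Function.comp_apply, val_witness]
  fin_cases j <;> simp [witnessCol, witnessRow, witnessVal]

theorem inRegion_witness_iff [NeZero k] (τ : Perm (Fin k)) (hn : 2 * k + 5 ≤ n) (j s : Fin 5) :
    InRegion τ (witness τ hn) (witnessCol hn j) (witnessRow hn s) ↔ ¬ (j = 4 ∧ s = 0) := by
  have hcol (hj : j ≠ 4) : (witnessCol hn j : ℕ) ≤ 3 := by
    fin_cases j <;> simp [witnessCol] at hj ⊢
  have hrow : k ≤ (witnessRow hn s : ℕ) := by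
    fin_cases s <;> simp [witnessRow] <;> omega
  have hrow_pos (hs : s ≠ 0) : 2 * k + 1 ≤ (witnessRow hn s : ℕ) := by
    fin_cases s <;> simp [witnessRow] at hs ⊢
  by_cases hj : j = 4
  · subst hj
    by_cases hs : s = 0
    · subst hs
      refine iff_of_false (not_inRegion_of_forall_le fun c hc => ?_) (by simp)
      replace hc : k + 4 + k ≤ c := hc
      change k ≤ witnessVal τ c
      unfold witnessVal
      split_ifs <;> omega
    · exact iff_of_true (inRegion_witness_of_le_add_four hn le_rfl (hrow_pos hs)) (by simp [hs])
  · exact iff_of_true (inRegion_witness_of_le_three hn (hcol hj) hrow) (by simp [hj])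

theorem isInner_witness_iff [NeZero k] (τ : Perm (Fin k)) (hn : 2 * k + 5 ≤ n) :
    IsInner τ (witness τ hn) i ↔ i ∈ Set.range (witnessCol hn) := by
  constructor
  · contrapose
    intro hi
    have hne : (i : ℕ) ≠ k + 4 ∧ (i : ℕ) ≠ 3 ∧ (i : ℕ) ≠ 2 ∧ (i : ℕ) ≠ 1 ∧ (i : ℕ) ≠ 0 := by
      simpa [witnessCol, Fin.ext_iff] using hi
    have hfst := natPerm_lt τ (a := i - 4)
    have hsnd := natPerm_lt τ (a := i - (k + 5))
    refine not_inRegion_of_forall_le fun c hc => ?_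
    rw [Fin.le_def, val_witness, val_witness]
    unfold witnessVal
    split_ifs <;> omega
  · rintro ⟨j, rfl⟩
    rw [IsInner, ← Function.comp_apply (f := witness τ hn), witness_comp_witnessCol,
      inRegion_witness_iff]
    rintro ⟨rfl, h⟩
    exact absurd h (by decide)

theorem isClassDiagram_witness [NeZero k] (τ : Perm (Fin k)) (hn : 2 * k + 5 ≤ n) :
    IsClassDiagram τ (witness τ hn) (witnessCol hn) (witnessRow hn) cornerDiagram where
  strictMono_col := by
    refine Fin.strictMono_iff_lt_succ.2 fun j => ?_
    fin_cases j <;> simp [witnessCol, Fin.lt_def]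
  strictMono_row := by
    refine Fin.strictMono_iff_lt_succ.2 fun j => ?_
    fin_cases j <;> simp +arith [witnessRow, Fin.lt_def]
  isInner_iff_col i := isInner_witness_iff τ hn
  isInner_iff_row i := by
    rw [isInner_witness_iff, ← witness_comp_witnessCol τ, Set.range_comp,
      (witness τ hn).injective.mem_set_image]
  le_iff j s := by rw [le_cornerDiagram_iff, inRegion_witness_iff]

end Witness

end ShapeWilf

open ShapeWilf

theorem stmt4 (k : ℕ) (hk : 1 ≤ k) (τ : Equiv.Perm (Fin k)) (n : ℕ) (hn : 2 * k + 5 ≤ n) :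
    SnCard n (blockSum p213 τ) < SnCard n (blockSum p123 τ) ∧
    SnCard n (blockSum p123 τ) < SnCard n (blockSum p312 τ) := by
  have : NeZero k := ⟨by omega⟩
  have hD := isClassDiagram_witness τ hn
  exact ⟨SnCard_blockSum_lt SYcard_p213_le_p123 hD SYcard_cornerDiagram_p213_lt_p123,
    SnCard_blockSum_lt SYcard_p123_le_p312 hD SYcard_cornerDiagram_p123_lt_p312⟩
end
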